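/- arXiv:0808.0133 — 3 statements merged into one kernel-verified Lean document; each statement's English description precedes it below -/
import Mathlib

section
/- For every pair (A,B) ∈ SL(2,ℝ)², exactly one of the following three alternatives holds: (a) some nonempty product of factors from {A,B} is elliptic (has trace of absolute value strictly less than 2); (b) (A,B) belongs to the closure of H₀; (c) there exists a finite sequence (ε₁,…,ε_k) ∈ {+,−}^k (k ≥ 0) such that F_{ε_k}∘⋯∘F_{ε₁}(A,B) is free, and in this case the sequence is unique. Moreover, for every compact set K ⊂ SL(2,ℝ)², only finitely many sequences (ε₁,…,ε_k) arise in alternative (c) from pairs belonging to K. -/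
/-!
Write `x = tr A`, `y = tr B`, `z = tr AB`.  The maps `F₊`, `F₋` act on trace triples by
`(x, y, z) ↦ (x, z, xz - y)` and `(x, y, z) ↦ (z, y, zy - x)`, and preserve
`δ = tr [A, B] - 2 = x² + y² + z² - xyz - 4` (`commInv`).  The proof is organised around the
condition `TwTriple` on trace triples: `|x|, |y| ≥ 2`, `δ > 0`, and `sgn(xy) z` lies below the
smaller root of `δ` as a quadratic in `z`.  A pair satisfying it is called twisted.

* Descent.  Free pairs are twisted with `δ ≥ 16`.  If `F₊ p` or `F₋ p` is twisted then so is `p`,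
  and `p` is not free; `F₊ p` and `F₋ p` cannot both be twisted (`TwTriple.of_plus`,
  `TwTriple.of_minus`, `TwTriple.not_both`).  Hence the sequence leading to a free pair is unique.
  Conversely, if `p` is twisted with `|z| ≥ 2`, then `p` is free or one of `F₊ p`, `F₋ p` is
  twisted, with `|x| + |y|` smaller by at least `δ / |xy|` (`TwTriple.step`).  As `δ` is invariant,
  the descent ends, so a twisted pair without elliptic products becomes free
  (`exists_free_seq`); and as `δ ≥ 16`, the length of the sequence is bounded by a polynomial in
  the traces (`free_seq_length`), which is local finiteness.
* Untwisted pairs.  If `|x|, |y| ≥ 2` and the pair is not twisted, it lies in the closure of `H₀`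
  (`closure_H0_of_not_twPair`): after sign changes, a conjugation and, if need be, a small
  perturbation the two matrices have nonnegative diagonals and off-diagonal entries of one common
  sign, and such a pair is a limit of pairs conjugate to pairs with positive entries, which
  contract the first quadrant.
* Free pairs generate groups without elliptic elements (`FreePair.groupNonElliptic`).  Since
  `det (AB - BA) = -δ < 0`, the traceless matrix `AB - BA` can be diagonalised, and then `A` and
  `B` both have equal diagonal entries.  Consequently `A = ± R₀ R₁` and `B = ± R₁ R₂` for three
  reflections with `R₁ = diag (1, -1)`, and the freeness inequalities provide ping-pong cones for
  `R₀, R₁, R₂`.  Words of even length are then, up to conjugation and sign, trivial or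
  cone-preserving, so their traces have absolute value at least `2`.  The maps `F₊`, `F₋` do not
  change the generated group.
* Closure of `H₀`.  For a pair in `H₀` every product preserves a common cone up to sign, so no
  product is elliptic and `xyz > 0`.  Both facts pass to the closure in the form `|tr| ≥ 2` and
  `xyz ≥ 0`, and `H₀` is mapped into itself by `F₊`, `F₋`; therefore pairs in the closure never
  become free.
-/

open Matrix

noncomputable section

/-- `SL(2,ℝ)`. -/
abbrev SL2 := Matrix.SpecialLinearGroup (Fin 2) ℝ

/-- Operator norm of a `2 × 2` real matrix, induced by the Euclidean norm on `ℝ²`. -/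
noncomputable def opNorm (A : Matrix (Fin 2) (Fin 2) ℝ) : ℝ :=
  ‖Matrix.toEuclideanCLM (𝕜 := ℝ) A‖

/-- Trace of an element of `SL(2,ℝ)`. -/
def trace2 (A : SL2) : ℝ := Matrix.trace (A : Matrix (Fin 2) (Fin 2) ℝ)

/-- Topology on `SL(2,ℝ)` induced from the space of `2 × 2` real matrices. -/
instance : TopologicalSpace SL2 := instTopologicalSpaceSubtype

/-- The real projective line: quotient of `ℝ² ∖ {0}` by nonzero scalar multiplication. -/
abbrev P1 := Projectivization ℝ (Fin 2 → ℝ)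

/-- The quotient topology on the real projective line. -/
instance : TopologicalSpace P1 := instTopologicalSpaceQuotient

/-- The projective action of `SL(2,ℝ)` on the real projective line. -/
def projAct (A : SL2) : P1 → P1 :=
  Projectivization.map (Matrix.SpecialLinearGroup.toLin' A).toLinearMap
    (Matrix.SpecialLinearGroup.toLin' A).injective

/-- For a word `w = [i₁, …, iₙ]`, the product `A_{iₙ} ⋯ A_{i₁}`. -/
def wordProd {N : ℕ} (A : Fin N → SL2) (w : List (Fin N)) : SL2 :=
  (w.reverse.map A).prod

/-- Uniform hyperbolicity with respect to the full shift on `N` symbols: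
every product of `n` matrices has operator norm at least `C·λⁿ`. -/
def UnifHyp {N : ℕ} (A : Fin N → SL2) : Prop :=
  ∃ C > (0:ℝ), ∃ lam > (1:ℝ), ∀ w : List (Fin N), w ≠ [] →
    opNorm (wordProd A w : Matrix (Fin 2) (Fin 2) ℝ) ≥ C * lam ^ w.length

/-- Transitivity of the subshift of finite type given by the transition relation `T`:
any symbol can be joined to any other by an admissible word. -/
def TransitiveSubshift {N : ℕ} (T : Fin N → Fin N → Prop) : Prop :=
  ∀ α β : Fin N, ∃ w : List (Fin N), w ≠ [] ∧ w.Chain' T ∧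
    w.head? = some α ∧ w.getLast? = some β

/-- Uniform hyperbolicity with respect to the subshift determined by the
transition relation `T`. -/
def UnifHypSub {N : ℕ} (T : Fin N → Fin N → Prop) (A : Fin N → SL2) : Prop :=
  ∃ C > (0:ℝ), ∃ lam > (1:ℝ), ∀ w : List (Fin N), w ≠ [] → w.Chain' T →
    opNorm (wordProd A w : Matrix (Fin 2) (Fin 2) ℝ) ≥ C * lam ^ w.length

/-- For a word `w` in two letters (`true ↦ A`, `false ↦ B`), the corresponding
product of the matrices `A`, `B` (letters applied right-to-left). -/
def pairProd (A B : SL2) (w : List Bool) : SL2 :=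
  (w.reverse.map fun b => if b then A else B).prod

/-- Uniform hyperbolicity of a pair `(A,B)` with respect to the full shift on two symbols. -/
def UnifHypPair (A B : SL2) : Prop :=
  ∃ C > (0:ℝ), ∃ lam > (1:ℝ), ∀ w : List Bool, w ≠ [] →
    opNorm (pairProd A B w : Matrix (Fin 2) (Fin 2) ℝ) ≥ C * lam ^ w.length

/-- The hyperbolicity locus for the full shift on two symbols. -/
def UHpairs : Set (SL2 × SL2) := {p | UnifHypPair p.1 p.2}

/-- The set of pairs having an elliptic product. -/
def Epairs : Set (SL2 × SL2) :=
  {p | ∃ w : List Bool, w ≠ [] ∧ |trace2 (pairProd p.1 p.2 w)| < 2}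

/-- An open interval in the projective line: a nonempty open connected subset
whose complement contains more than one point. -/
def IsOpenInterval (I : Set P1) : Prop :=
  IsOpen I ∧ IsConnected I ∧ Iᶜ.Nontrivial

/-- `H₀`: pairs possessing a common strictly invariant open interval. -/
def H0 : Set (SL2 × SL2) :=
  {p | ∃ I : Set P1, IsOpenInterval I ∧
        projAct p.1 '' closure I ⊆ I ∧ projAct p.2 '' closure I ⊆ I}

/-- `H_id`: pairs with `|tr A| > 2`, `|tr B| > 2`, `|tr AB| > 2`, `tr A · tr B · tr AB < 0`. -/
def Hid : Set (SL2 × SL2) :=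
  {p | 2 < |trace2 p.1| ∧ 2 < |trace2 p.2| ∧ 2 < |trace2 (p.1 * p.2)| ∧
       trace2 p.1 * trace2 p.2 * trace2 (p.1 * p.2) < 0}

/-- `F₊(A,B) = (A, AB)`. -/
def Fplus (p : SL2 × SL2) : SL2 × SL2 := (p.1, p.1 * p.2)

/-- `F₋(A,B) = (BA, B)`. -/
def Fminus (p : SL2 × SL2) : SL2 × SL2 := (p.2 * p.1, p.2)

/-- `applySeq [ε₁, …, ε_k] = F_{ε_k} ∘ ⋯ ∘ F_{ε₁}`, where `true` stands for `+`
and `false` for `−`. -/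
def applySeq (s : List Bool) (p : SL2 × SL2) : SL2 × SL2 :=
  s.foldl (fun q e => if e then Fplus q else Fminus q) p

/-- A pair `(A,B)` is free if `|tr A| ≥ 2`, `|tr B| ≥ 2`, `|tr AB| ≥ 2` and
`tr A · tr B · tr AB < 0`. -/
def FreePair (p : SL2 × SL2) : Prop :=
  2 ≤ |trace2 p.1| ∧ 2 ≤ |trace2 p.2| ∧ 2 ≤ |trace2 (p.1 * p.2)| ∧
    trace2 p.1 * trace2 p.2 * trace2 (p.1 * p.2) < 0

/-- A pair is straight if it lies in the closure of `H₀`. -/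
def Straight (p : SL2 × SL2) : Prop := p ∈ closure H0

/-- A pair `(A,B)` is twisted if `|tr A| ≥ 2`, `|tr B| ≥ 2` and it is not straight. -/
def Twisted (p : SL2 × SL2) : Prop :=
  2 ≤ |trace2 p.1| ∧ 2 ≤ |trace2 p.2| ∧ ¬ Straight p

/-- A pair is almost hyperbolic if every image of it under the monoid generated by
`F₊`, `F₋` consists of two non-elliptic matrices. -/
def AlmostHyperbolic (p : SL2 × SL2) : Prop :=
  ∀ s : List Bool, 2 ≤ |trace2 (applySeq s p).1| ∧ 2 ≤ |trace2 (applySeq s p).2|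

/-- Group-hyperbolicity of a pair: exponential growth over all reduced words
in the free group on two generators (`true ↦ A`, `false ↦ B`). -/
def GroupHyp (A B : SL2) : Prop :=
  ∃ C > (0:ℝ), ∃ τ > (0:ℝ), ∀ g : FreeGroup Bool, g ≠ 1 →
    opNorm ((FreeGroup.lift (fun b => if b then A else B) g : SL2) :
        Matrix (Fin 2) (Fin 2) ℝ) ≥
      C * Real.exp (τ * (FreeGroup.toWord g).length)

/-- `M` has finitely many connected components, and distinct components have
disjoint closures. -/
def FinCompDisjClosures (M : Set P1) : Prop :=
  {C : Set P1 | ∃ x ∈ M, C = connectedComponentIn M x}.Finite ∧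
    ∀ x ∈ M, ∀ y ∈ M, connectedComponentIn M x ≠ connectedComponentIn M y →
      closure (connectedComponentIn M x) ∩ closure (connectedComponentIn M y) = ∅

end

/-! ### Arithmetic of trace triples -/

/-- The trace condition satisfied exactly by the twisted pairs, for
`x = tr A`, `y = tr B`, `z = tr AB`.  With `|x| = 2 cosh a`, `|y| = 2 cosh b`, the last two
inequalities say that `sgn(xy) z` is less than `2 cosh (a - b)`, the smaller root of
`Z² - |xy| Z + x² + y² - 4`. -/
def TwTriple (x y z : ℝ) : Prop :=
  2 ≤ |x| ∧ 2 ≤ |y| ∧ 2 * (x * y * z) < x ^ 2 * y ^ 2 ∧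
    0 < x ^ 2 + y ^ 2 + z ^ 2 - x * y * z - 4

lemma twTriple_neg_left (x y z : ℝ) : TwTriple (-x) y (-z) ↔ TwTriple x y z := by
  simp [TwTriple]

lemma twTriple_neg_right (x y z : ℝ) : TwTriple x (-y) (-z) ↔ TwTriple x y z := by
  simp [TwTriple]

lemma twTriple_neg_neg (x y z : ℝ) : TwTriple (-x) (-y) z ↔ TwTriple x y z := by
  simp [TwTriple]

lemma twTriple_swap (x y z : ℝ) : TwTriple x y z ↔ TwTriple y x z := by
  unfold TwTriple
  constructor <;> rintro ⟨h1, h2, h3, h4⟩ <;> exact ⟨h2, h1, by linarith, by linarith⟩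

lemma TwTriple.of_neg {x y z : ℝ} (hx : 2 ≤ |x|) (hy : 2 ≤ |y|) (hz : 2 ≤ |z|)
    (h : x * y * z < 0) : TwTriple x y z ∧ 16 ≤ x ^ 2 + y ^ 2 + z ^ 2 - x * y * z - 4 := by
  have hx2 : 4 ≤ x ^ 2 := by rw [← sq_abs]; nlinarith
  have hy2 : 4 ≤ y ^ 2 := by rw [← sq_abs]; nlinarith
  have hz2 : 4 ≤ z ^ 2 := by rw [← sq_abs]; nlinarith
  have h8 : 8 ≤ |x * y * z| := by
    rw [abs_mul, abs_mul]
    have : 4 ≤ |x| * |y| := by nlinarith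
    nlinarith
  rw [abs_of_neg h] at h8
  have : 0 ≤ x ^ 2 * y ^ 2 := by positivity
  exact ⟨⟨hx, hy, by linarith, by linarith⟩, by linarith⟩

/-- If the image of a triple under `F₊` is twisted, so is the triple, and it is not free. -/
lemma TwTriple.of_plus {x y z : ℝ} (h : TwTriple x z (x * z - y)) :
    TwTriple x y z ∧ 0 < x * y * z ∧ x ^ 2 * z ^ 2 < 2 * (x * y * z) := by
  obtain ⟨h1, h2, h3, h4⟩ := h
  have hx2 : 4 ≤ x ^ 2 := by rw [← sq_abs]; nlinarith
  have hz2 : 4 ≤ z ^ 2 := by rw [← sq_abs]; nlinarith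
  have hw : x ^ 2 * z ^ 2 < 2 * (x * y * z) := by nlinarith
  have hxz : 16 ≤ x ^ 2 * z ^ 2 := by nlinarith
  have hw0 : 0 < x * y * z := by linarith
  -- `x² z² < 2 x y z` gives `|x z| < 2 |y|`, hence `z² ≤ x² z² / 4 < y²`
  have hyy : x ^ 2 * z ^ 2 < 4 * y ^ 2 := by
    have h5 : (x ^ 2 * z ^ 2) * (x ^ 2 * z ^ 2) < (x ^ 2 * z ^ 2) * (4 * y ^ 2) := by
      nlinarith
    exact lt_of_mul_lt_mul_left h5 (by positivity)
  have hzy : z ^ 2 < y ^ 2 := by nlinarith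
  refine ⟨⟨h1, ?_, ?_, by nlinarith⟩, hw0, hw⟩
  · exact h2.trans (sq_le_sq.1 hzy.le)
  · have h6 : (2 * (x * y * z)) ^ 2 < (x ^ 2 * y ^ 2) ^ 2 := by
      have : (2 * (x * y * z)) ^ 2 = (x ^ 2 * y ^ 2) * (4 * z ^ 2) := by ring
      rw [this, sq (x ^ 2 * y ^ 2)]
      apply mul_lt_mul_of_pos_left
      · nlinarith
      · nlinarith
    exact lt_of_pow_lt_pow_left₀ 2 (by positivity) h6

lemma TwTriple.of_minus {x y z : ℝ} (h : TwTriple z y (z * y - x)) :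
    TwTriple x y z ∧ 0 < x * y * z ∧ y ^ 2 * z ^ 2 < 2 * (x * y * z) := by
  have h' : TwTriple y z (y * z - x) := by
    rw [twTriple_swap, mul_comm y z]; exact h
  obtain ⟨h1, h2, h3⟩ := h'.of_plus
  exact ⟨(twTriple_swap _ _ _).1 h1, by linarith, by linarith⟩

lemma TwTriple.not_both {x y z : ℝ} (h : TwTriple x z (x * z - y))
    (h' : TwTriple z y (z * y - x)) : False := by
  obtain ⟨-, h1, h2⟩ := h.of_plus
  obtain ⟨-, -, h3⟩ := h'.of_minus
  have hz : 4 ≤ z ^ 2 := by rw [← sq_abs]; nlinarith [h.2.1]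
  have hx : 4 ≤ x ^ 2 := by rw [← sq_abs]; nlinarith [h.1]
  have h4 : (x ^ 2 * z ^ 2) * (y ^ 2 * z ^ 2) < (2 * (x * y * z)) * (2 * (x * y * z)) :=
    mul_lt_mul h2 h3.le (by nlinarith [sq_nonneg z, abs_nonneg y, sq_abs y, h'.2.1]) (by linarith)
  have h5 : 4 * (x * y * z) ^ 2 ≤ z ^ 2 * (x * y * z) ^ 2 := by gcongr
  nlinarith

/-- One step of the descent for positive `x ≤ y`.  In terms of `y = 2 cosh b` etc. it says that
`z = 2 cosh c < 2 cosh (b - a)` forces `b > a + c`. -/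
lemma step_pos {x y z : ℝ} (hx : 2 ≤ x) (hz : 2 ≤ z) (hxy : x ≤ y)
    (h : TwTriple x y z) : TwTriple x z (x * z - y) ∧ z < y ∧
      x ^ 2 + y ^ 2 + z ^ 2 - x * y * z - 4 ≤ (y - z) * (x * y) := by
  obtain ⟨-, -, h3, h4⟩ := h
  have hy : 2 ≤ y := hx.trans hxy
  have hxy0 : 0 < x * y := by nlinarith
  have h2z : 2 * z < x * y := by nlinarith
  have hprod : x ^ 2 + y ^ 2 + z ^ 2 - x * y * z - 4 ≤ (y - z) * (x * y - y - z) := by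
    nlinarith [mul_nonneg (sub_nonneg.2 hx) (by nlinarith : 0 ≤ y ^ 2 - x - 2)]
  have hzy : z < y := by
    by_contra hcon
    push Not at hcon
    nlinarith
  have hmain : x * z < 2 * y := by
    by_contra hcon
    push Not at hcon
    -- the quadratic in `z` is decreasing on `[2 y / x, x y / 2]` and nonpositive at `2 y / x`
    have h5 : 0 < x ^ 2 * (x ^ 2 + y ^ 2 + z ^ 2 - x * y * z - 4) := by positivity
    have h6 : x ^ 2 * (x ^ 2 + y ^ 2 + z ^ 2 - x * y * z - 4)
        = (x * z - 2 * y) * (x * z + 2 * y - x ^ 2 * y) + (x ^ 2 - 4) * (x ^ 2 - y ^ 2) := by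
      ring
    have h7 : x * z + 2 * y - x ^ 2 * y ≤ 0 := by nlinarith
    have h8 : (x ^ 2 - 4) * (x ^ 2 - y ^ 2) ≤ 0 :=
      mul_nonpos_of_nonneg_of_nonpos (by nlinarith) (by nlinarith)
    nlinarith [mul_nonneg (sub_nonneg.2 hcon) (neg_nonneg.2 h7)]
  refine ⟨⟨?_, ?_, ?_, by nlinarith⟩, hzy, ?_⟩
  · rwa [abs_of_nonneg (by linarith)]
  · rwa [abs_of_nonneg (by linarith)]
  · have : 0 < x * z := by nlinarith
    nlinarith
  · nlinarith [mul_nonneg (sub_nonneg.2 hzy.le) (by linarith : 0 ≤ y + z)]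

lemma step_pos' {x y z : ℝ} (hx : 2 ≤ x) (hy : 2 ≤ y) (hz : 2 ≤ z) (h : TwTriple x y z) :
    (TwTriple x z (x * z - y) ∧ z < y ∧
      x ^ 2 + y ^ 2 + z ^ 2 - x * y * z - 4 ≤ (y - z) * (x * y)) ∨
    (TwTriple z y (z * y - x) ∧ z < x ∧
      x ^ 2 + y ^ 2 + z ^ 2 - x * y * z - 4 ≤ (x - z) * (x * y)) := by
  rcases le_total x y with hxy | hxy
  · exact Or.inl (step_pos hx hz hxy h)
  · right
    obtain ⟨h1, h2, h3⟩ := step_pos hy hz hxy ((twTriple_swap _ _ _).1 h)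
    rw [twTriple_swap, mul_comm y z] at h1
    exact ⟨h1, h2, by linarith⟩

/-- The descent: a twisted triple is free, or `F₊` or `F₋` keeps it twisted while `|x| + |y|`
drops by at least `δ / |x y|`, where `δ = x² + y² + z² - xyz - 4`. -/
lemma TwTriple.step {x y z : ℝ} (h : TwTriple x y z) (hz : 2 ≤ |z|) :
    x * y * z < 0 ∨
    (TwTriple x z (x * z - y) ∧ |z| < |y| ∧
      x ^ 2 + y ^ 2 + z ^ 2 - x * y * z - 4 ≤ (|y| - |z|) * (|x| * |y|)) ∨
    (TwTriple z y (z * y - x) ∧ |z| < |x| ∧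
      x ^ 2 + y ^ 2 + z ^ 2 - x * y * z - 4 ≤ (|x| - |z|) * (|x| * |y|)) := by
  have hx := h.1
  have hy := h.2.1
  have hx0 : x ≠ 0 := by rintro rfl; norm_num at hx
  have hy0 : y ≠ 0 := by rintro rfl; norm_num at hy
  have hz0 : z ≠ 0 := by rintro rfl; norm_num at hz
  rcases lt_or_gt_of_ne hx0 with sx | sx <;> rcases lt_or_gt_of_ne hy0 with sy | sy <;>
    rcases lt_or_gt_of_ne hz0 with sz | sz
  · left; have := mul_pos_of_neg_of_neg sx sy; nlinarith
  · right
    rw [abs_of_neg sx] at *; rw [abs_of_neg sy] at *; rw [abs_of_pos sz] at *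
    have := step_pos' hx hy hz ((twTriple_neg_neg _ _ _).2 h)
    rw [show -x * z - -y = -(x * z - y) by ring, show z * -y - -x = -(z * y - x) by ring,
      twTriple_neg_left, twTriple_neg_right] at this
    simpa using this
  · right
    rw [abs_of_neg sx] at *; rw [abs_of_pos sy] at *; rw [abs_of_neg sz] at *
    have := step_pos' hx hy hz ((twTriple_neg_left _ _ _).2 h)
    rw [show -x * -z - y = (x * z - y) by ring, show -z * y - -x = -(z * y - x) by ring,
      twTriple_neg_neg, twTriple_neg_left] at this
    simpa using this
  · left; have := mul_neg_of_neg_of_pos sx sy; nlinarith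
  · right
    rw [abs_of_pos sx] at *; rw [abs_of_neg sy] at *; rw [abs_of_neg sz] at *
    have := step_pos' hx hy hz ((twTriple_neg_right _ _ _).2 h)
    rw [show x * -z - -y = -(x * z - y) by ring, show -z * -y - x = (z * y - x) by ring,
      twTriple_neg_right, twTriple_neg_neg] at this
    simpa using this
  · left; have := mul_neg_of_pos_of_neg sx sy; nlinarith
  · left; have := mul_pos sx sy; nlinarith
  · right
    rw [abs_of_pos sx] at *; rw [abs_of_pos sy] at *; rw [abs_of_pos sz] at *
    exact step_pos' hx hy hz h

/-! ### Twisted pairs and the descent to free pairs -/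

lemma trace2_eq (A : SL2) : trace2 A = A 0 0 + A 1 1 := by
  simp [trace2, Matrix.trace_fin_two]

lemma det_eq (A : SL2) : A 0 0 * A 1 1 - A 0 1 * A 1 0 = 1 := by
  have := A.det_coe
  rwa [Matrix.det_fin_two] at this

lemma mul_entry (A B : SL2) (i j : Fin 2) : (A * B) i j = A i 0 * B 0 j + A i 1 * B 1 j := by
  rw [Matrix.SpecialLinearGroup.coe_mul, Matrix.mul_apply, Fin.sum_univ_two]

lemma trace2_mul_comm (A B : SL2) : trace2 (A * B) = trace2 (B * A) := by
  simp only [trace2_eq, mul_entry]; ring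

lemma trace2_mul_mul_left (A B : SL2) :
    trace2 (A * (A * B)) = trace2 A * trace2 (A * B) - trace2 B := by
  simp only [trace2_eq, mul_entry]
  linear_combination (-(B 0 0) - B 1 1) * det_eq A

lemma trace2_mul_mul_right (A B : SL2) :
    trace2 ((B * A) * B) = trace2 (A * B) * trace2 B - trace2 A := by
  simp only [trace2_eq, mul_entry]
  linear_combination (-(A 0 0) - A 1 1) * det_eq B

/-- The trace triple of the pair is twisted. -/
def TwPair (p : SL2 × SL2) : Prop := TwTriple (trace2 p.1) (trace2 p.2) (trace2 (p.1 * p.2))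

/-- `tr [A,B] - 2`, an invariant of `F₊` and `F₋`. -/
def commInv (p : SL2 × SL2) : ℝ :=
  trace2 p.1 ^ 2 + trace2 p.2 ^ 2 + trace2 (p.1 * p.2) ^ 2
    - trace2 p.1 * trace2 p.2 * trace2 (p.1 * p.2) - 4

lemma twPair_plus (p : SL2 × SL2) : TwPair (Fplus p) ↔
    TwTriple (trace2 p.1) (trace2 (p.1 * p.2))
      (trace2 p.1 * trace2 (p.1 * p.2) - trace2 p.2) := by
  simp only [TwPair, Fplus, trace2_mul_mul_left]

lemma twPair_minus (p : SL2 × SL2) : TwPair (Fminus p) ↔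
    TwTriple (trace2 (p.1 * p.2)) (trace2 p.2)
      (trace2 (p.1 * p.2) * trace2 p.2 - trace2 p.1) := by
  simp only [TwPair, Fminus, trace2_mul_mul_right, trace2_mul_comm p.2 p.1]

lemma commInv_plus (p : SL2 × SL2) : commInv (Fplus p) = commInv p := by
  simp only [commInv, Fplus, trace2_mul_mul_left]; ring

lemma commInv_minus (p : SL2 × SL2) : commInv (Fminus p) = commInv p := by
  simp only [commInv, Fminus, trace2_mul_mul_right, trace2_mul_comm p.2 p.1]; ring

lemma FreePair.twPair {p : SL2 × SL2} (h : FreePair p) : TwPair p ∧ 16 ≤ commInv p :=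
  TwTriple.of_neg h.1 h.2.1 h.2.2.1 h.2.2.2

lemma applySeq_cons (e : Bool) (s : List Bool) (p : SL2 × SL2) :
    applySeq (e :: s) p = applySeq s (if e then Fplus p else Fminus p) := rfl

/-- A pair from which a free pair is reached is twisted, with `tr [A, B] - 2 ≥ 16`. -/
lemma twPair_of_free (s : List Bool) (p : SL2 × SL2) (h : FreePair (applySeq s p)) :
    TwPair p ∧ 16 ≤ commInv p := by
  induction s generalizing p with
  | nil => exact h.twPair
  | cons e s ih =>
    rw [applySeq_cons] at h
    have := ih _ h
    cases e
    · simp only [Bool.false_eq_true, if_false, twPair_minus, commInv_minus] at this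
      exact ⟨this.1.of_minus.1, this.2⟩
    · simp only [if_true, twPair_plus, commInv_plus] at this
      exact ⟨this.1.of_plus.1, this.2⟩

lemma not_free_of_cons {e : Bool} {s : List Bool} {p : SL2 × SL2}
    (h : FreePair (applySeq (e :: s) p)) : ¬ FreePair p := by
  rw [applySeq_cons] at h
  have := (twPair_of_free _ _ h).1
  intro hp
  have h4 := hp.2.2.2
  cases e
  · simp only [Bool.false_eq_true, if_false, twPair_minus] at this
    linarith [this.of_minus.2.1]
  · simp only [if_true, twPair_plus] at this
    linarith [this.of_plus.2.1]

lemma free_seq_unique (s t : List Bool) (p : SL2 × SL2) (hs : FreePair (applySeq s p))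
    (ht : FreePair (applySeq t p)) : s = t := by
  induction s generalizing p t with
  | nil =>
    cases t with
    | nil => rfl
    | cons e t => exact absurd hs (not_free_of_cons ht)
  | cons e s ih =>
    cases t with
    | nil => exact absurd ht (not_free_of_cons hs)
    | cons e' t =>
      rw [applySeq_cons] at hs ht
      have h1 := (twPair_of_free _ _ hs).1
      have h2 := (twPair_of_free _ _ ht).1
      by_cases hee : e = e'
      · subst hee
        rw [ih t _ hs ht]
      · exfalso
        cases e <;> cases e' <;> simp only [Bool.false_eq_true, if_false, if_true, twPair_plus,
          twPair_minus, not_true] at h1 h2 hee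
        · exact TwTriple.not_both h2 h1
        · exact TwTriple.not_both h1 h2

/-- A sequence leading to a free pair has length `O(M³)` when `|tr A|, |tr B| ≤ M`, because
each step decreases `|tr A| + |tr B|` by at least `16 / M²`. -/
lemma free_seq_length (M : ℝ) (s : List Bool) (p : SL2 × SL2)
    (h : FreePair (applySeq s p)) (h1 : |trace2 p.1| ≤ M) (h2 : |trace2 p.2| ≤ M) :
    16 * (s.length : ℝ) ≤ (|trace2 p.1| + |trace2 p.2|) * M ^ 2 := by
  induction s generalizing p with
  | nil => simp; positivity
  | cons e s ih =>
    obtain ⟨hT, hc⟩ := twPair_of_free _ _ h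
    rw [applySeq_cons] at h
    have hT' := (twPair_of_free _ _ h).1
    have hM : |trace2 p.1| * |trace2 p.2| ≤ M ^ 2 := by
      rw [sq]; gcongr; exact (abs_nonneg _).trans h1
    rw [commInv] at hc
    have key : ∀ d : ℝ, 0 ≤ d → 16 ≤ d * (|trace2 p.1| * |trace2 p.2|) → 16 ≤ d * M ^ 2 :=
      fun d hd h => h.trans (by gcongr)
    rw [List.length_cons]
    push_cast
    cases e
    · simp only [Bool.false_eq_true, if_false] at h hT'
      rw [twPair_minus] at hT'
      obtain h5 | ⟨h5, -⟩ | ⟨-, h5, h6⟩ := TwTriple.step hT hT'.1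
      · linarith [hT'.of_minus.2.1]
      · exact (TwTriple.not_both h5 hT').elim
      · have h7 := key _ (by linarith) (hc.trans h6)
        have h8 := ih (Fminus p) h
          (by simp only [Fminus, trace2_mul_comm p.2 p.1]; linarith) (by simpa [Fminus] using h2)
        simp only [Fminus, trace2_mul_comm p.2 p.1] at h8
        linarith
    · simp only [if_true] at h hT'
      rw [twPair_plus] at hT'
      obtain h5 | ⟨-, h5, h6⟩ | ⟨h5, -⟩ := TwTriple.step hT hT'.2.1
      · linarith [hT'.of_plus.2.1]
      · have h7 := key _ (by linarith) (hc.trans h6)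
        have h8 := ih (Fplus p) h (by simpa [Fplus] using h1) (by simp only [Fplus]; linarith)
        simp only [Fplus] at h8
        linarith
      · exact (TwTriple.not_both hT' h5).elim

/-- A pair is in `Epairs` exactly when the semigroup generated by its two entries contains an
elliptic element. -/
lemma mem_Epairs_iff (p : SL2 × SL2) : p ∈ Epairs ↔
    ∃ M ∈ Subsemigroup.closure {p.1, p.2}, |trace2 M| < 2 := by
  have hA : p.1 ∈ Subsemigroup.closure {p.1, p.2} := Subsemigroup.subset_closure (by simp)
  have hB : p.2 ∈ Subsemigroup.closure {p.1, p.2} := Subsemigroup.subset_closure (by simp)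
  have hmem : ∀ w : List Bool, w ≠ [] → pairProd p.1 p.2 w ∈ Subsemigroup.closure {p.1, p.2} := by
    intro w
    induction w with
    | nil => simp
    | cons b w ih =>
      intro _
      have hb : (if b then p.1 else p.2) ∈ Subsemigroup.closure {p.1, p.2} := by
        split_ifs <;> assumption
      have e : pairProd p.1 p.2 (b :: w) = pairProd p.1 p.2 w * (if b then p.1 else p.2) := by
        simp [pairProd]
      rw [e]
      by_cases hw : w = []
      · simpa [hw, pairProd] using hb
      · exact mul_mem (ih hw) hb
  constructor
  · rintro ⟨w, hw, h⟩
    exact ⟨_, hmem w hw, h⟩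
  · rintro ⟨M, hM, h⟩
    suffices ∃ w : List Bool, w ≠ [] ∧ pairProd p.1 p.2 w = M by
      obtain ⟨w, hw, rfl⟩ := this
      exact ⟨w, hw, h⟩
    clear h
    induction hM using Subsemigroup.closure_induction with
    | mem x hx =>
      rcases hx with rfl | hx
      · exact ⟨[true], by simp, by simp [pairProd]⟩
      · rw [Set.mem_singleton_iff] at hx
        exact ⟨[false], by simp, by simp [pairProd, hx]⟩
    | mul x y _ _ hx hy =>
      obtain ⟨w, hw, rfl⟩ := hx
      obtain ⟨v, hv, rfl⟩ := hy
      exact ⟨v ++ w, by simp [hw], by simp [pairProd]⟩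

lemma not_Epairs_iff (p : SL2 × SL2) : p ∉ Epairs ↔
    ∀ M ∈ Subsemigroup.closure {p.1, p.2}, 2 ≤ |trace2 M| := by
  rw [mem_Epairs_iff]; push Not; rfl

lemma not_Epairs_of_mem {p q : SL2 × SL2} (h1 : q.1 ∈ Subsemigroup.closure {p.1, p.2})
    (h2 : q.2 ∈ Subsemigroup.closure {p.1, p.2}) (hp : p ∉ Epairs) : q ∉ Epairs := by
  rw [not_Epairs_iff] at *
  intro M hM
  refine hp M ((Subsemigroup.closure_le).2 ?_ hM)
  rintro x (rfl | hx)
  · exact h1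
  · rw [Set.mem_singleton_iff] at hx; rw [hx]; exact h2

lemma not_Epairs_plus {p : SL2 × SL2} (hp : p ∉ Epairs) : Fplus p ∉ Epairs :=
  not_Epairs_of_mem (Subsemigroup.subset_closure (by simp [Fplus]))
    (mul_mem (Subsemigroup.subset_closure (by simp)) (Subsemigroup.subset_closure (by simp))) hp

lemma not_Epairs_minus {p : SL2 × SL2} (hp : p ∉ Epairs) : Fminus p ∉ Epairs :=
  not_Epairs_of_mem
    (mul_mem (Subsemigroup.subset_closure (by simp)) (Subsemigroup.subset_closure (by simp)))
    (Subsemigroup.subset_closure (by simp [Fminus])) hp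

lemma traces_of_not_Epairs {p : SL2 × SL2} (hp : p ∉ Epairs) :
    2 ≤ |trace2 p.1| ∧ 2 ≤ |trace2 p.2| ∧ 2 ≤ |trace2 (p.1 * p.2)| := by
  rw [not_Epairs_iff] at hp
  have hA : p.1 ∈ Subsemigroup.closure {p.1, p.2} := Subsemigroup.subset_closure (by simp)
  have hB : p.2 ∈ Subsemigroup.closure {p.1, p.2} := Subsemigroup.subset_closure (by simp)
  exact ⟨hp _ hA, hp _ hB, hp _ (mul_mem hA hB)⟩

/-- A twisted pair without elliptic products descends to a free pair: each step keeps `commInv`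
and lowers `|tr A| + |tr B|` by an amount bounded below. -/
lemma exists_free_seq {p : SL2 × SL2} (hE : p ∉ Epairs) (hT : TwPair p) :
    ∃ s, FreePair (applySeq s p) := by
  obtain ⟨M, hM1, hM2⟩ : ∃ M, |trace2 p.1| ≤ M ∧ |trace2 p.2| ≤ M :=
    ⟨_, le_max_left _ _, le_max_right _ _⟩
  obtain ⟨d, hd⟩ : ∃ d, commInv p = d := ⟨_, rfl⟩
  have hd0 : 0 < d := hd ▸ hT.2.2.2
  obtain ⟨n, hn⟩ : ∃ n : ℕ, (|trace2 p.1| + |trace2 p.2|) * M ^ 2 ≤ n * d := by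
    obtain ⟨n, hn⟩ := exists_nat_ge ((|trace2 p.1| + |trace2 p.2|) * M ^ 2 / d)
    exact ⟨n, (div_le_iff₀ hd0).1 hn⟩
  have hM0 : 2 ≤ M := hT.1.trans hM1
  induction n generalizing p with
  | zero =>
    exfalso
    have : 0 < (|trace2 p.1| + |trace2 p.2|) * M ^ 2 := by
      have := hT.1; have := hT.2.1; positivity
    simp at hn; linarith
  | succ n ih =>
    obtain ⟨t1, t2, t3⟩ := traces_of_not_Epairs hE
    push_cast at hn
    rw [commInv] at hd
    have hM : |trace2 p.1| * |trace2 p.2| ≤ M ^ 2 := by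
      rw [sq]; gcongr
    have key : ∀ e : ℝ, 0 ≤ e → d ≤ e * (|trace2 p.1| * |trace2 p.2|) → d ≤ e * M ^ 2 :=
      fun e he h => h.trans (by gcongr)
    obtain h5 | ⟨h4, h5, h6⟩ | ⟨h4, h5, h6⟩ := TwTriple.step hT t3
    · exact ⟨[], t1, t2, t3, h5⟩
    · rw [← twPair_plus] at h4
      have h7 := key _ (by linarith) (hd ▸ h6)
      obtain ⟨s, hs⟩ := ih (not_Epairs_plus hE) h4 hM1 (by simp only [Fplus]; linarith)
        (by rw [commInv_plus]; exact hd) (by simp only [Fplus]; linarith)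
      exact ⟨true :: s, hs⟩
    · rw [← twPair_minus] at h4
      have h7 := key _ (by linarith) (hd ▸ h6)
      obtain ⟨s, hs⟩ := ih (not_Epairs_minus hE) h4
        (by simp only [Fminus, trace2_mul_comm p.2 p.1]; linarith) hM2
        (by rw [commInv_minus]; exact hd)
        (by simp only [Fminus, trace2_mul_comm p.2 p.1]; linarith)
      exact ⟨false :: s, hs⟩

/-! ### Matrices with an invariant cone -/

/-- A positive solution of `u (n+2) = τ u (n+1) - u n` forces `τ ≥ 2`: otherwise the ratios
`u (n+1) / u n` decrease by at least `2 - τ` at each step. -/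
lemma two_le_of_pos_rec (τ : ℝ) (u : ℕ → ℝ) (hpos : ∀ n, 0 < u n)
    (hrec : ∀ n, u (n + 2) = τ * u (n + 1) - u n) : 2 ≤ τ := by
  by_contra hτ
  push Not at hτ
  have hstep : ∀ n, u (n + 2) / u (n + 1) ≤ u (n + 1) / u n - (2 - τ) := by
    intro n
    have h0 := hpos n
    have h1 := hpos (n + 1)
    rw [hrec, ← sub_nonneg]
    have : u (n + 1) / u n - (2 - τ) - (τ * u (n + 1) - u n) / u (n + 1)
        = (u (n + 1) - u n) ^ 2 / (u n * u (n + 1)) := by field_simp; ring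
    rw [this]; positivity
  have hlin : ∀ n : ℕ, u (n + 1) / u n ≤ u 1 / u 0 - n * (2 - τ) := by
    intro n
    induction n with
    | zero => simp
    | succ n ih => push_cast; linarith [hstep n]
  obtain ⟨n, hn⟩ := exists_nat_gt (u 1 / u 0 / (2 - τ))
  rw [div_lt_iff₀ (by linarith)] at hn
  have := div_pos (hpos (n + 1)) (hpos n)
  linarith [hlin n]

/-- The Cayley-Hamilton relation `M² v = tr M · M v - v`. -/
lemma mulVec_mulVec_of_det (M : Matrix (Fin 2) (Fin 2) ℝ) (hM : M.det = 1) (v : Fin 2 → ℝ) :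
    M *ᵥ (M *ᵥ v) = M.trace • (M *ᵥ v) - v := by
  rw [Matrix.det_fin_two] at hM
  ext i
  fin_cases i
  · simp [Matrix.mulVec, dotProduct, Fin.sum_univ_two, Matrix.trace_fin_two]
    linear_combination (-(v 0)) * hM
  · simp [Matrix.mulVec, dotProduct, Fin.sum_univ_two, Matrix.trace_fin_two]
    linear_combination (-(v 1)) * hM

/-- If `±M` maps into itself a nonempty set on which some linear form is positive, then
`± tr M ≥ 2`. -/
lemma two_le_trace_of_cone (M : Matrix (Fin 2) (Fin 2) ℝ) (hM : M.det = 1)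
    (D : Set (Fin 2 → ℝ)) (hD : D.Nonempty) (ℓ : (Fin 2 → ℝ) →ₗ[ℝ] ℝ) (hℓ : ∀ v ∈ D, 0 < ℓ v)
    (σ : ℝ) (hσ : σ ^ 2 = 1) (hMD : ∀ v ∈ D, σ • (M *ᵥ v) ∈ D) : 2 ≤ σ * M.trace := by
  obtain ⟨v, hv⟩ := hD
  set f : (Fin 2 → ℝ) → (Fin 2 → ℝ) := fun w => σ • (M *ᵥ w) with hf
  have hmem : ∀ n, f^[n] v ∈ D := by
    intro n
    induction n with
    | zero => exact hv
    | succ n ih => rw [Function.iterate_succ_apply']; exact hMD _ ih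
  refine two_le_of_pos_rec _ (fun n => ℓ (f^[n] v)) (fun n => hℓ _ (hmem n)) fun n => ?_
  simp only [Function.iterate_succ_apply']
  generalize f^[n] v = w
  have : f (f w) = (σ * M.trace) • f w - w := by
    simp only [hf]
    rw [Matrix.mulVec_smul, mulVec_mulVec_of_det M hM, smul_smul, smul_sub, smul_smul, smul_smul,
      ← sq, hσ, one_smul]
    congr 2
    linear_combination (-M.trace) * hσ
  rw [this, map_sub, map_smul, smul_eq_mul]

/-! ### Ping-pong for three reflections -/

/-- Data for a ping-pong argument for three involutions on the projective line: `R i` maps the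
cones `C j`, `j ≠ i`, into `± C i`.  The linear form `ℓ i` is positive on `C i`; the cones are
not required to be open, convex or disjoint. -/
structure PingPong (R : Fin 3 → Matrix (Fin 2) (Fin 2) ℝ) where
  C : Fin 3 → Set (Fin 2 → ℝ)
  ℓ : Fin 3 → ((Fin 2 → ℝ) →ₗ[ℝ] ℝ)
  nonempty : ∀ i, (C i).Nonempty
  pos : ∀ i, ∀ v ∈ C i, 0 < ℓ i v
  sq_eq_one : ∀ i, R i * R i = 1
  det_eq : ∀ i, (R i).det = -1
  maps : ∀ i j, i ≠ j → ∃ σ : ℝ, σ ^ 2 = 1 ∧ ∀ v ∈ C j, σ • (R i *ᵥ v) ∈ C i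

section

variable {R : Fin 3 → Matrix (Fin 2) (Fin 2) ℝ}

/-- A reduced word with first letter `i` and last letter different from `j` maps `C j` into
`± C i`. -/
lemma PingPong.word (h : PingPong R) (i : Fin 3) (l : List (Fin 3))
    (hl : (i :: l).IsChain (· ≠ ·)) (j : Fin 3)
    (hj : (i :: l).getLast (by simp) ≠ j) :
    ∃ σ : ℝ, σ ^ 2 = 1 ∧ ∀ v ∈ h.C j, σ • (((i :: l).map R).prod *ᵥ v) ∈ h.C i := by
  induction l generalizing i with
  | nil => simpa using h.maps i j (by simpa using hj)
  | cons k l ih =>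
    rw [List.isChain_cons_cons] at hl
    obtain ⟨σ, hσ, h1⟩ := ih k hl.2 (by simpa using hj)
    obtain ⟨τ, hτ, h2⟩ := h.maps i k hl.1
    refine ⟨τ * σ, by rw [mul_pow, hσ, hτ, one_mul], fun v hv => ?_⟩
    have := h2 _ (h1 v hv)
    rw [Matrix.mulVec_smul, Matrix.mulVec_mulVec, smul_smul] at this
    rw [List.map_cons, List.prod_cons]
    exact this

lemma PingPong.det_word (h : PingPong R) (l : List (Fin 3)) :
    ((l.map R).prod).det = (-1) ^ l.length := by
  induction l with
  | nil => simp
  | cons i l ih =>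
    rw [List.map_cons, List.prod_cons, Matrix.det_mul, ih, h.det_eq, List.length_cons, pow_succ']

/-- Words of even length in the three involutions are never elliptic: after free and cyclic
reduction the word is trivial or has different first and last letters, and in the latter case
it has an invariant cone. -/
lemma PingPong.trace_word (h : PingPong R) (l : List (Fin 3)) (hl : Even l.length) :
    2 ≤ |((l.map R).prod).trace| := by
  obtain ⟨n, hn⟩ : ∃ n, l.length = n := ⟨_, rfl⟩
  induction n using Nat.strong_induction_on generalizing l with
  | _ n ih =>
  by_cases hc : l.IsChain (· ≠ ·)
  · rcases l with _ | ⟨i, l⟩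
    · simp
    · by_cases hi : (i :: l).getLast (by simp) = i
      · rcases List.eq_nil_or_concat l with rfl | ⟨m, k, rfl⟩
        · simp at hl
        · rw [List.concat_eq_append] at *
          have hk : k = i := by simpa using hi
          subst hk
          have e : (((k :: (m ++ [k])).map R).prod).trace = ((m.map R).prod).trace := by
            rw [List.map_cons, List.prod_cons, Matrix.trace_mul_comm, List.map_append,
              List.prod_append, mul_assoc]
            simp [h.sq_eq_one]
          rw [e]
          simp only [List.length_cons, List.length_append, List.length_nil] at hn hl
          refine ih m.length (by omega) m ?_ rfl
          rw [Nat.even_iff] at *; omega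
      · obtain ⟨σ, hσ, h1⟩ := h.word i l hc i hi
        have hdet : (((i :: l).map R).prod).det = 1 := by rw [h.det_word, hl.neg_one_pow]
        have := two_le_trace_of_cone _ hdet _ (h.nonempty i) (h.ℓ i) (h.pos i) σ hσ h1
        rcases mul_self_eq_one_iff.1 ((sq σ).symm.trans hσ) with rfl | rfl
        · rw [one_mul] at this; exact this.trans (le_abs_self _)
        · rw [neg_one_mul] at this; exact this.trans (neg_le_abs _)
  · rw [List.isChain_iff_forall_rel_of_append_cons_cons] at hc
    push Not at hc
    obtain ⟨a, b, l1, l2, rfl, hab⟩ := hc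
    subst hab
    have e : (((l1 ++ a :: a :: l2).map R).prod) = (((l1 ++ l2).map R).prod) := by
      simp only [List.map_append, List.map_cons, List.prod_append, List.prod_cons]
      rw [← mul_assoc (R a), h.sq_eq_one, one_mul]
    rw [e]
    simp only [List.length_append, List.length_cons] at hn hl
    refine ih (l1 ++ l2).length (by simp; omega) _ ?_ rfl
    rw [Nat.even_iff] at *
    simp; omega

lemma PingPong.word_reverse (h : PingPong R) (l : List (Fin 3)) :
    (l.map R).prod * (l.reverse.map R).prod = 1 := by
  induction l with
  | nil => simp
  | cons i l ih =>
    simp only [List.reverse_cons, List.map_cons, List.prod_cons, List.map_append,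
      List.prod_append, List.map_nil, List.prod_nil, mul_one]
    rw [mul_assoc, ← mul_assoc _ _ (R i), ih, one_mul, h.sq_eq_one]

/-- The pair generates a group without elliptic elements. -/
def GroupNonElliptic (A B : SL2) : Prop := ∀ M ∈ Subgroup.closure {A, B}, 2 ≤ |trace2 M|

/-- If `A = ± R 0 R 1` and `B = ± R 1 R 2` then every element of the group generated by `A` and `B`
is, up to sign, a word of even length in the involutions. -/
lemma PingPong.groupNonElliptic (h : PingPong R) (A B : SL2) (ρ σ : ℝ) (hρ : ρ ^ 2 = 1)
    (hσ : σ ^ 2 = 1) (hA : (A : Matrix (Fin 2) (Fin 2) ℝ) = ρ • (R 0 * R 1))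
    (hB : (B : Matrix (Fin 2) (Fin 2) ℝ) = σ • (R 1 * R 2)) : GroupNonElliptic A B := by
  intro M hM
  suffices ∃ τ : ℝ, τ ^ 2 = 1 ∧ ∃ l : List (Fin 3), Even l.length ∧
      (M : Matrix (Fin 2) (Fin 2) ℝ) = τ • (l.map R).prod by
    obtain ⟨τ, hτ, l, hl, e⟩ := this
    have hτ1 : |τ| = 1 := by
      rcases mul_self_eq_one_iff.1 ((sq τ).symm.trans hτ) with rfl | rfl <;> simp
    rw [trace2, e, Matrix.trace_smul, smul_eq_mul, abs_mul, hτ1, one_mul]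
    exact h.trace_word l hl
  induction hM using Subgroup.closure_induction with
  | mem x hx =>
    rcases hx with rfl | hx
    · exact ⟨ρ, hρ, [0, 1], by decide, by simpa using hA⟩
    · rw [Set.mem_singleton_iff] at hx
      subst hx
      exact ⟨σ, hσ, [1, 2], by decide, by simpa using hB⟩
  | one => exact ⟨1, by norm_num, [], by simp, by simp⟩
  | mul x y _ _ hx hy =>
    obtain ⟨τ, hτ, l, hl, e⟩ := hx
    obtain ⟨τ', hτ', l', hl', e'⟩ := hy
    refine ⟨τ * τ', by rw [mul_pow, hτ, hτ', one_mul], l ++ l', ?_, ?_⟩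
    · rw [List.length_append]; exact hl.add hl'
    · rw [Matrix.SpecialLinearGroup.coe_mul, e, e', Matrix.smul_mul, Matrix.mul_smul, smul_smul,
        List.map_append, List.prod_append]
  | inv x _ hx =>
    obtain ⟨τ, hτ, l, hl, e⟩ := hx
    refine ⟨τ, hτ, l.reverse, by simpa using hl, ?_⟩
    have h1 : (x : Matrix (Fin 2) (Fin 2) ℝ) * (τ • (l.reverse.map R).prod) = 1 := by
      rw [e, Matrix.smul_mul, Matrix.mul_smul, smul_smul, ← sq, hτ, one_smul, h.word_reverse]
    have h2 : ((x⁻¹ : SL2) : Matrix (Fin 2) (Fin 2) ℝ) * (x : Matrix (Fin 2) (Fin 2) ℝ) = 1 := by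
      rw [← Matrix.SpecialLinearGroup.coe_mul, inv_mul_cancel, Matrix.SpecialLinearGroup.coe_one]
    exact left_inv_eq_right_inv h2 h1

end

/-- Conjugation invariance. -/
lemma GroupNonElliptic.conj {A B : SL2} (P : SL2)
    (h : GroupNonElliptic (P⁻¹ * A * P) (P⁻¹ * B * P)) : GroupNonElliptic A B := by
  intro M hM
  have htr : trace2 M = trace2 (P⁻¹ * M * P) := by
    rw [trace2_mul_comm (P⁻¹ * M) P, mul_inv_cancel_left]
  rw [htr]
  apply h
  clear htr
  induction hM using Subgroup.closure_induction with
  | mem x hx =>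
    apply Subgroup.subset_closure
    rcases hx with rfl | hx
    · simp
    · rw [Set.mem_singleton_iff] at hx; simp [hx]
  | one => simp [one_mem]
  | mul x y _ _ hx hy =>
    rw [show P⁻¹ * (x * y) * P = (P⁻¹ * x * P) * (P⁻¹ * y * P) by group]
    exact mul_mem hx hy
  | inv x _ hx =>
    rw [show P⁻¹ * x⁻¹ * P = (P⁻¹ * x * P)⁻¹ by group]
    exact inv_mem hx

lemma groupNonElliptic_of_closure_le {A B A' B' : SL2} (h : GroupNonElliptic A' B')
    (hA : A ∈ Subgroup.closure {A', B'}) (hB : B ∈ Subgroup.closure {A', B'}) :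
    GroupNonElliptic A B := by
  intro M hM
  refine h M ((Subgroup.closure_le _).2 ?_ hM)
  rintro x (rfl | hx)
  · exact hA
  · rw [Set.mem_singleton_iff] at hx; rw [hx]; exact hB

/-- The linear form `v ↦ m v₀ + n v₁`. -/
def linForm (m n : ℝ) : (Fin 2 → ℝ) →ₗ[ℝ] ℝ :=
  m • LinearMap.proj 0 + n • LinearMap.proj 1

lemma linForm_apply (m n : ℝ) (v : Fin 2 → ℝ) : linForm m n v = m * v 0 + n * v 1 := rfl

/-- The cones of the ping-pong: `R 1 = diag (1, -1)` reflects in the geodesic joining the two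
coordinate axes, and the axes of `R 0` and `R 2` join the directions `(b, a + 1)`, `(a + 1, c)`
respectively `(q, p + 1)`, `(p + 1, r)` in the first quadrant; the hypothesis `h` says that these
two sectors do not overlap. -/
def pingPong (a b c p q r : ℝ) (ha : 1 ≤ a) (hb : 0 ≤ b) (hc : 0 ≤ c) (hp : 1 ≤ p) (hq : 0 ≤ q)
    (hr : 0 ≤ r) (hA : a ^ 2 - b * c = 1) (hB : p ^ 2 - q * r = 1)
    (h : (a + 1) * (p + 1) ≤ b * r) :
    PingPong ![!![a, -b; c, -a], !![1, 0; 0, -1], !![p, -q; r, -p]] where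
  C := ![{v | 0 ≤ v 0 ∧ 0 ≤ v 1 ∧ 0 < v 0 + v 1 ∧ b * v 1 ≤ (a + 1) * v 0 ∧
          c * v 0 ≤ (a + 1) * v 1},
        {v | 0 ≤ v 0 ∧ v 1 ≤ 0 ∧ 0 < v 0 - v 1},
        {v | 0 ≤ v 0 ∧ 0 ≤ v 1 ∧ 0 < v 0 + v 1 ∧ q * v 1 ≤ (p + 1) * v 0 ∧
          r * v 0 ≤ (p + 1) * v 1}]
  ℓ := ![linForm 1 1, linForm 1 (-1), linForm 1 1]
  nonempty := by
    intro i
    fin_cases i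
    · refine ⟨![b, a + 1], ?_⟩
      simp
      refine ⟨hb, by linarith, by linarith, by nlinarith, by nlinarith⟩
    · exact ⟨![1, 0], by simp⟩
    · refine ⟨![q, p + 1], ?_⟩
      simp
      refine ⟨hq, by linarith, by linarith, by nlinarith, by nlinarith⟩
  pos := by
    intro i v hv
    fin_cases i <;> simp [linForm_apply] at hv ⊢ <;> linarith
  sq_eq_one := by
    intro i
    fin_cases i <;> ext i j <;> fin_cases i <;> fin_cases j <;>
      simp [Matrix.mul_apply, Fin.sum_univ_two] <;> linarith
  det_eq := by
    intro i
    fin_cases i <;> simp [Matrix.det_fin_two] <;> linarith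
  maps := by
    intro i j hij
    have hb0 : 0 < b := by
      rcases hb.eq_or_lt with rfl | hb
      · nlinarith
      · exact hb
    have hr0 : 0 < r := by
      rcases hr.eq_or_lt with rfl | hr
      · nlinarith
      · exact hr
    fin_cases i <;> fin_cases j <;> simp at hij
    · refine ⟨1, by norm_num, fun v hv => ?_⟩
      simp [dotProduct, Fin.sum_univ_two] at hv ⊢
      obtain ⟨h0, h1, h2⟩ := hv
      refine ⟨by nlinarith, by nlinarith, by nlinarith, by nlinarith, by nlinarith⟩
    · -- here `b v₁ ≥ (a + 1) v₀`: the cone `C 2` lies on one side of `C 0`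
      refine ⟨-1, by norm_num, fun v hv => ?_⟩
      simp [dotProduct, Fin.sum_univ_two] at hv ⊢
      obtain ⟨h0, h1, h2, h3, h4⟩ := hv
      have k1 : (a + 1) * v 0 ≤ b * v 1 := by
        have e1 : (p + 1) * ((a + 1) * v 0) ≤ (p + 1) * (b * v 1) := by
          nlinarith [mul_le_mul_of_nonneg_right h h0, mul_le_mul_of_nonneg_left h4 hb]
        exact le_of_mul_le_mul_left e1 (by linarith)
      have k2 : c * v 0 ≤ (a - 1) * v 1 := by
        have e1 : (a + 1) * (c * v 0) ≤ (a + 1) * ((a - 1) * v 1) := by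
          nlinarith [mul_le_mul_of_nonneg_left k1 hc]
        exact le_of_mul_le_mul_left e1 (by linarith)
      refine ⟨by nlinarith, by nlinarith, by nlinarith, by nlinarith, by nlinarith⟩
    · refine ⟨1, by norm_num, fun v hv => ?_⟩
      simp [dotProduct, Fin.sum_univ_two] at hv ⊢
      exact ⟨hv.1, hv.2.1, by linarith [hv.2.2.1]⟩
    · refine ⟨1, by norm_num, fun v hv => ?_⟩
      simp [dotProduct, Fin.sum_univ_two] at hv ⊢
      exact ⟨hv.1, hv.2.1, by linarith [hv.2.2.1]⟩
    · refine ⟨1, by norm_num, fun v hv => ?_⟩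
      simp [dotProduct, Fin.sum_univ_two] at hv ⊢
      obtain ⟨h0, h1, h2, h3, h4⟩ := hv
      have k1 : (p + 1) * v 1 ≤ r * v 0 := by
        have e1 : (a + 1) * ((p + 1) * v 1) ≤ (a + 1) * (r * v 0) := by
          nlinarith [mul_le_mul_of_nonneg_right h h1, mul_le_mul_of_nonneg_left h3 hr]
        exact le_of_mul_le_mul_left e1 (by linarith)
      have k2 : q * v 1 ≤ (p - 1) * v 0 := by
        have e1 : (p + 1) * (q * v 1) ≤ (p + 1) * ((p - 1) * v 0) := by
          nlinarith [mul_le_mul_of_nonneg_left k1 hq]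
        exact le_of_mul_le_mul_left e1 (by linarith)
      refine ⟨by nlinarith, by nlinarith, by nlinarith, by nlinarith, by nlinarith⟩
    · refine ⟨1, by norm_num, fun v hv => ?_⟩
      simp [dotProduct, Fin.sum_univ_two] at hv ⊢
      obtain ⟨h0, h1, h2⟩ := hv
      refine ⟨by nlinarith, by nlinarith, by nlinarith, by nlinarith, by nlinarith⟩

/-- With equal diagonal entries, `A = ± R 0 R 1` and `B = ± R 1 R 2` for `R 1 = diag (1, -1)`; the
last hypothesis separates the cones of `R 0` and `R 2`. -/
lemma groupNonElliptic_aux (A B : SL2) (ρ σ : ℝ) (hρ : ρ ^ 2 = 1) (hσ : σ ^ 2 = 1)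
    (hA : A 0 0 = A 1 1) (hB : B 0 0 = B 1 1) (ha : 1 ≤ ρ * A 0 0) (hp : 1 ≤ σ * B 0 0)
    (hb : 0 ≤ ρ * A 0 1) (hc : 0 ≤ ρ * A 1 0) (hq : σ * B 0 1 ≤ 0) (hr : σ * B 1 0 ≤ 0)
    (h : (ρ * A 0 0 + 1) * (σ * B 0 0 + 1) ≤ ρ * A 0 1 * -(σ * B 1 0)) :
    GroupNonElliptic A B := by
  have dA := det_eq A
  have dB := det_eq B
  refine (pingPong (ρ * A 0 0) (ρ * A 0 1) (ρ * A 1 0) (σ * B 0 0) (-(σ * B 0 1)) (-(σ * B 1 0))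
    ha hb hc hp (by linarith) (by linarith) ?_ ?_ h).groupNonElliptic A B ρ σ hρ hσ ?_ ?_
  · rw [← hA] at dA; linear_combination (ρ ^ 2) * dA + hρ
  · rw [← hB] at dB; linear_combination (σ ^ 2) * dB + hσ
  · ext i j
    fin_cases i <;> fin_cases j <;> simp [← hA] <;> linear_combination (-A _ _) * hρ
  · ext i j
    fin_cases i <;> fin_cases j <;> simp [← hB] <;> linear_combination (-B _ _) * hσ

lemma inv_entries (P : SL2) : P⁻¹ 0 0 = P 1 1 ∧ P⁻¹ 0 1 = - P 0 1 ∧ P⁻¹ 1 0 = - P 1 0 ∧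
    P⁻¹ 1 1 = P 0 0 := by
  rw [Matrix.SpecialLinearGroup.coe_inv, Matrix.adjugate_fin_two]
  simp

/-- The element of `SL(2,ℝ)` with the given entries. -/
def mkSL (a b c d : ℝ) (h : a * d - b * c = 1) : SL2 :=
  ⟨!![a, b; c, d], by rw [Matrix.det_fin_two]; simpa using h⟩

@[simp] lemma mkSL_00 (a b c d : ℝ) (h) : mkSL a b c d h 0 0 = a := rfl
@[simp] lemma mkSL_01 (a b c d : ℝ) (h) : mkSL a b c d h 0 1 = b := rfl
@[simp] lemma mkSL_10 (a b c d : ℝ) (h) : mkSL a b c d h 1 0 = c := rfl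
@[simp] lemma mkSL_11 (a b c d : ℝ) (h) : mkSL a b c d h 1 1 = d := rfl

/-- The rotation by a right angle. -/
def rotW : SL2 := mkSL 0 (-1) 1 0 (by norm_num)

/-- Entries of a conjugate, as cross products of the columns of `P` with their images under `M`. -/
lemma conj_entry (P M : SL2) :
    (P⁻¹ * M * P) 0 0 = P 1 1 * (M 0 0 * P 0 0 + M 0 1 * P 1 0)
      - P 0 1 * (M 1 0 * P 0 0 + M 1 1 * P 1 0) ∧
    (P⁻¹ * M * P) 0 1 = P 1 1 * (M 0 0 * P 0 1 + M 0 1 * P 1 1)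
      - P 0 1 * (M 1 0 * P 0 1 + M 1 1 * P 1 1) ∧
    (P⁻¹ * M * P) 1 0 = P 0 0 * (M 1 0 * P 0 0 + M 1 1 * P 1 0)
      - P 1 0 * (M 0 0 * P 0 0 + M 0 1 * P 1 0) ∧
    (P⁻¹ * M * P) 1 1 = P 0 0 * (M 1 0 * P 0 1 + M 1 1 * P 1 1)
      - P 1 0 * (M 0 0 * P 0 1 + M 0 1 * P 1 1) := by
  obtain ⟨h1, h2, h3, h4⟩ := inv_entries P
  refine ⟨?_, ?_, ?_, ?_⟩ <;> simp only [mul_entry, h1, h2, h3, h4] <;> ring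

lemma conj_rotW_entry (M : SL2) :
    (rotW⁻¹ * M * rotW) 0 0 = M 1 1 ∧ (rotW⁻¹ * M * rotW) 0 1 = - M 1 0 ∧
    (rotW⁻¹ * M * rotW) 1 0 = - M 0 1 ∧ (rotW⁻¹ * M * rotW) 1 1 = M 0 0 := by
  obtain ⟨h1, h2, h3, h4⟩ := conj_entry rotW M
  rw [h1, h2, h3, h4]
  simp [rotW]

/-- A real matrix with distinct real eigenvalues is diagonal in some unimodular basis. -/
lemma exists_diag (j k l m : ℝ) (h : 0 < (j + m) ^ 2 - 4 * (j * m - k * l)) :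
    ∃ P : SL2, P 1 1 * (j * P 0 1 + k * P 1 1) - P 0 1 * (l * P 0 1 + m * P 1 1) = 0 ∧
      P 0 0 * (l * P 0 0 + m * P 1 0) - P 1 0 * (j * P 0 0 + k * P 1 0) = 0 := by
  by_cases hk : k = 0
  · subst hk
    have hjm : j - m ≠ 0 := by
      intro h0
      have : j = m := by linarith
      subst this; nlinarith
    refine ⟨mkSL (j - m) 0 l (1 / (j - m)) (by field_simp; ring), ?_, ?_⟩ <;> simp
    ring
  · obtain ⟨s, hs, hs0⟩ : ∃ s : ℝ, s ^ 2 = (j + m) ^ 2 - 4 * (j * m - k * l) ∧ s ≠ 0 :=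
      ⟨_, Real.sq_sqrt h.le, (Real.sqrt_pos.2 h).ne'⟩
    refine ⟨mkSL k (-1 / s) ((m - j + s) / 2) (-((m - j - s) / (2 * k * s)))
      (by field_simp; ring), ?_, ?_⟩
    · simp
      field_simp
      linear_combination hs
    · simp
      linear_combination (-k / 4) * hs

/-! ### Free pairs generate groups without elliptic elements -/

/-- `commInv` is minus the determinant of `AB - BA`, a traceless matrix. -/
lemma commInv_eq (A B : SL2) : commInv (A, B) =
    (A 0 1 * B 1 0 - B 0 1 * A 1 0) ^ 2 +
      (A 0 0 * B 0 1 + A 0 1 * B 1 1 - B 0 0 * A 0 1 - B 0 1 * A 1 1) *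
      (A 1 0 * B 0 0 + A 1 1 * B 1 0 - B 1 0 * A 0 0 - B 1 1 * A 1 0) := by
  simp only [commInv, trace2_eq, mul_entry]
  linear_combination (4 - (B 0 0 + B 1 1) ^ 2) * det_eq A
    + (4 * (A 0 0 * A 1 1 - A 0 1 * A 1 0) - (A 0 0 + A 1 1) ^ 2) * det_eq B

lemma trace2_conj (P M : SL2) : trace2 (P⁻¹ * M * P) = trace2 M := by
  rw [trace2_mul_comm (P⁻¹ * M) P, mul_inv_cancel_left]

lemma conj_mul_conj (P A B : SL2) : (P⁻¹ * A * P) * (P⁻¹ * B * P) = P⁻¹ * (A * B) * P := by group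

lemma FreePair.conj {A B : SL2} (P : SL2) (h : FreePair (A, B)) :
    FreePair (P⁻¹ * A * P, P⁻¹ * B * P) := by
  simpa only [FreePair, conj_mul_conj, trace2_conj] using h

/-- In a basis of eigenvectors of `AB - BA` both matrices have equal diagonal entries. -/
lemma exists_conj_diag_eq {A B : SL2} (h : 0 < commInv (A, B)) : ∃ P : SL2,
    (P⁻¹ * A * P) 0 0 = (P⁻¹ * A * P) 1 1 ∧ (P⁻¹ * B * P) 0 0 = (P⁻¹ * B * P) 1 1 := by
  have hc := commInv_eq A B
  obtain ⟨P, h1, h2⟩ := exists_diag (A 0 1 * B 1 0 - B 0 1 * A 1 0)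
    (A 0 0 * B 0 1 + A 0 1 * B 1 1 - B 0 0 * A 0 1 - B 0 1 * A 1 1)
    (A 1 0 * B 0 0 + A 1 1 * B 1 0 - B 1 0 * A 0 0 - B 1 1 * A 1 0)
    (-(A 0 1 * B 1 0 - B 0 1 * A 1 0)) (by nlinarith)
  have hP := det_eq P
  obtain ⟨a00, a01, a10, a11⟩ := conj_entry P A
  obtain ⟨b00, b01, b10, b11⟩ := conj_entry P B
  have hinv : commInv (P⁻¹ * A * P, P⁻¹ * B * P) = commInv (A, B) := by
    simp only [commInv, conj_mul_conj, trace2_conj]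
  have hc' := commInv_eq (P⁻¹ * A * P) (P⁻¹ * B * P)
  have e1 : (P⁻¹ * A * P) 0 0 * (P⁻¹ * B * P) 0 1 + (P⁻¹ * A * P) 0 1 * (P⁻¹ * B * P) 1 1
      - (P⁻¹ * B * P) 0 0 * (P⁻¹ * A * P) 0 1 - (P⁻¹ * B * P) 0 1 * (P⁻¹ * A * P) 1 1 = 0 := by
    rw [← mul_entry, sub_sub, ← mul_entry, conj_mul_conj, conj_mul_conj]
    rw [(conj_entry P (A * B)).2.1, (conj_entry P (B * A)).2.1]
    simp only [mul_entry]
    linear_combination h1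
  have e2 : (P⁻¹ * A * P) 1 0 * (P⁻¹ * B * P) 0 0 + (P⁻¹ * A * P) 1 1 * (P⁻¹ * B * P) 1 0
      - (P⁻¹ * B * P) 1 0 * (P⁻¹ * A * P) 0 0 - (P⁻¹ * B * P) 1 1 * (P⁻¹ * A * P) 1 0 = 0 := by
    rw [← mul_entry, sub_sub, ← mul_entry, conj_mul_conj, conj_mul_conj]
    rw [(conj_entry P (A * B)).2.2.1, (conj_entry P (B * A)).2.2.1]
    simp only [mul_entry]
    linear_combination h2
  refine ⟨P, ?_⟩
  rw [e1, hinv] at hc'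
  generalize P⁻¹ * A * P = A' at *
  generalize P⁻¹ * B * P = B' at *
  have hj : A' 0 1 * B' 1 0 - B' 0 1 * A' 1 0 ≠ 0 := by
    intro h0
    rw [h0] at hc'; linarith
  constructor
  · apply sub_eq_zero.1
    refine (mul_eq_zero.1 ?_).resolve_left hj
    linear_combination (-(A' 1 0)) * e1 + (-(A' 0 1)) * e2
  · apply sub_eq_zero.1
    refine (mul_eq_zero.1 ?_).resolve_left hj
    linear_combination (-(B' 1 0)) * e1 + (-(B' 0 1)) * e2

lemma exists_sign {a : ℝ} (h : 1 ≤ |a|) : ∃ ρ : ℝ, ρ ^ 2 = 1 ∧ 1 ≤ ρ * a := by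
  rcases le_total 0 a with h0 | h0
  · rw [abs_of_nonneg h0] at h; exact ⟨1, by norm_num, by linarith⟩
  · rw [abs_of_nonpos h0] at h; exact ⟨-1, by norm_num, by linarith⟩

/-- The case of equal diagonal entries, with off-diagonal entries of `± A` nonnegative and of `± B`
nonpositive.  Here `ρσ tr AB ≤ -2` forces `b r` to lie outside the interval between
`(a - 1)(p - 1)` and `(a + 1)(p + 1)`, and one of the two orders of the ping-pong applies. -/
lemma FreePair.groupNonElliptic_of_sign {A B : SL2} {ρ σ : ℝ} (h : FreePair (A, B))
    (hA : A 0 0 = A 1 1) (hB : B 0 0 = B 1 1) (hρ : ρ ^ 2 = 1) (hσ : σ ^ 2 = 1)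
    (ha : 1 ≤ ρ * A 0 0) (hp : 1 ≤ σ * B 0 0)
    (hb : 0 ≤ ρ * A 0 1) (hc : 0 ≤ ρ * A 1 0) (hq : σ * B 0 1 ≤ 0) (hr : σ * B 1 0 ≤ 0) :
    GroupNonElliptic A B := by
  have dA := det_eq A
  have dB := det_eq B
  obtain ⟨h1, h2, h3, h4⟩ := h
  simp only [trace2_eq, mul_entry] at h3 h4
  rw [← hA] at dA h3 h4
  rw [← hB] at dB h3 h4
  set a := ρ * A 0 0 with ha'
  set b := ρ * A 0 1 with hb'
  set c := ρ * A 1 0 with hc'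
  set p := σ * B 0 0 with hp'
  set q := -(σ * B 0 1) with hq'
  set r := -(σ * B 1 0) with hr'
  have hq0 : 0 ≤ q := by linarith
  have hr0 : 0 ≤ r := by linarith
  have eA : a ^ 2 - b * c = 1 := by
    simp only [ha', hb', hc']; linear_combination (ρ ^ 2) * dA + hρ
  have eB : p ^ 2 - q * r = 1 := by
    simp only [hp', hq', hr']; linear_combination (σ ^ 2) * dB + hσ
  -- the trace of `AB` after normalising signs
  set t := A 0 0 * B 0 0 + A 0 1 * B 1 0 + (A 1 0 * B 0 1 + A 0 0 * B 0 0) with ht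
  have et : ρ * σ * t = 2 * (a * p) - b * r - c * q := by
    simp only [ht, ha', hb', hc', hp', hq', hr']; ring
  have hts : (ρ * σ * t) ^ 2 = t ^ 2 := by
    linear_combination (σ ^ 2 * t ^ 2) * hρ + t ^ 2 * hσ
  have hneg : a * p * (ρ * σ * t) < 0 := by
    have : a * p * (ρ * σ * t) = (A 0 0 + A 0 0) * (B 0 0 + B 0 0) * t / 4 := by
      simp only [ha', hp']
      linear_combination (A 0 0 * B 0 0 * t * σ ^ 2) * hρ + (A 0 0 * B 0 0 * t) * hσ
    rw [this]; linarith
  have hap : 0 < a * p := mul_pos (by linarith) (by linarith)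
  have ht0 : ρ * σ * t < 0 := by
    by_contra h0
    push Not at h0
    exact absurd (mul_nonneg hap.le h0) (not_le.2 hneg)
  have htm : ρ * σ * t ≤ -2 := by
    have : (2:ℝ) ^ 2 ≤ (ρ * σ * t) ^ 2 := by
      rw [hts, ← sq_abs t]; gcongr
    by_contra h0
    push Not at h0
    exact absurd (sq_lt_sq' h0 (by linarith)) (not_lt.2 this)
  rw [et] at htm
  have key : 0 ≤ (b * r - (a + 1) * (p + 1)) * (b * r - (a - 1) * (p - 1)) := by
    have e : b * r * (c * q) = (a ^ 2 - 1) * (p ^ 2 - 1) := by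
      linear_combination (- (c * b)) * eB + (-(p ^ 2 - 1)) * eA
    have e2 : (b * r - (a + 1) * (p + 1)) * (b * r - (a - 1) * (p - 1)) =
        b * r * (b * r + c * q - 2 * (a * p) - 2) := by linear_combination -e
    rw [e2]
    exact mul_nonneg (mul_nonneg hb hr0) (by linarith)
  by_cases hbr : (a + 1) * (p + 1) ≤ b * r
  · exact groupNonElliptic_aux A B ρ σ hρ hσ hA hB ha hp hb hc hq hr hbr
  · -- then `c q` is large, and the roles of the two matrices are exchanged
    have hbr2 : b * r ≤ (a - 1) * (p - 1) := by
      by_contra h0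
      push Not at h0 hbr
      exact absurd key (not_le.2 (mul_neg_of_neg_of_pos (sub_neg.2 hbr) (sub_pos.2 h0)))
    have hcq : (p + 1) * (a + 1) ≤ q * c := by linarith
    obtain ⟨i00, i01, i10, i11⟩ := inv_entries A
    obtain ⟨k00, k01, k10, k11⟩ := inv_entries B
    have := groupNonElliptic_aux B⁻¹ A⁻¹ σ ρ hσ hρ (by rw [k00, k11, hB]) (by rw [i00, i11, hA])
      (by rw [k00, ← hB]; exact hp) (by rw [i00, ← hA]; exact ha)
      (by rw [k01]; linarith) (by rw [k10]; linarith)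
      (by rw [i01]; linarith) (by rw [i10]; linarith)
      (by
        rw [k00, i00, k01, i10, ← hA, ← hB]
        linarith)
    refine groupNonElliptic_of_closure_le this ?_ ?_
    · rw [← inv_mem_iff]; exact Subgroup.subset_closure (by simp)
    · rw [← inv_mem_iff]; exact Subgroup.subset_closure (by simp)

/-- The diagonals cannot dominate, so `(b, c)` and `(q, r)` have a common sign. -/
lemma same_sign {b c q r T : ℝ} (hbc : 0 ≤ b * c) (hqr : 0 ≤ q * r) (hT : 0 < T)
    (h : T ≤ b * r + c * q) :
    (0 ≤ b ∧ 0 ≤ c ∧ 0 ≤ q ∧ 0 ≤ r) ∨ (b ≤ 0 ∧ c ≤ 0 ∧ q ≤ 0 ∧ r ≤ 0) := by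
  rcases mul_nonneg_iff.1 hbc with ⟨h1, h2⟩ | ⟨h1, h2⟩ <;>
    rcases mul_nonneg_iff.1 hqr with ⟨h3, h4⟩ | ⟨h3, h4⟩
  · exact Or.inl ⟨h1, h2, h3, h4⟩
  · nlinarith [mul_nonneg h1 (neg_nonneg.2 h4), mul_nonneg h2 (neg_nonneg.2 h3)]
  · nlinarith [mul_nonneg h4 (neg_nonneg.2 h1), mul_nonneg h3 (neg_nonneg.2 h2)]
  · exact Or.inr ⟨h1, h2, h3, h4⟩

lemma FreePair.groupNonElliptic_of_diag {A B : SL2} (h : FreePair (A, B))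
    (hA : A 0 0 = A 1 1) (hB : B 0 0 = B 1 1) : GroupNonElliptic A B := by
  have dA := det_eq A
  have dB := det_eq B
  have h1 := h.1
  have h2 := h.2.1
  have h4 := h.2.2.2
  simp only [trace2_eq, ← hA, ← hB, ← two_mul, abs_mul, mul_entry] at h1 h2 h4
  rw [← hA] at dA
  rw [← hB] at dB
  rw [abs_two] at h1 h2
  obtain ⟨ρ, hρ, ha⟩ := exists_sign (a := A 0 0) (by linarith)
  obtain ⟨σ, hσ, hp⟩ := exists_sign (a := B 0 0) (by linarith)
  have h4' : 2 * (ρ * A 0 0 * (σ * B 0 0)) - (ρ * A 0 1 * -(σ * B 1 0))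
      - (ρ * A 1 0 * -(σ * B 0 1)) < 0 := by
    have e : 4 * ((ρ * A 0 0) * (σ * B 0 0)) * (2 * (ρ * A 0 0 * (σ * B 0 0)) -
        (ρ * A 0 1 * -(σ * B 1 0)) - (ρ * A 1 0 * -(σ * B 0 1))) = 2 * A 0 0 * (2 * B 0 0) *
        (A 0 0 * B 0 0 + A 0 1 * B 1 0 + (A 1 0 * B 0 1 + A 0 0 * B 0 0)) := by
      have e1 : ρ ^ 2 * σ ^ 2 = 1 := by rw [hρ, hσ, one_mul]
      linear_combination (2 * A 0 0 * (2 * B 0 0) *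
        (A 0 0 * B 0 0 + A 0 1 * B 1 0 + (A 1 0 * B 0 1 + A 0 0 * B 0 0))) * e1
    rw [← e] at h4
    by_contra h0
    push Not at h0
    nlinarith [mul_nonneg (mul_nonneg (zero_le_one.trans ha) (zero_le_one.trans hp)) h0]
  have hbc : 0 ≤ (ρ * A 0 1) * (ρ * A 1 0) := by nlinarith
  have hqr : 0 ≤ -(σ * B 0 1) * -(σ * B 1 0) := by nlinarith
  rcases same_sign (T := 2 * (ρ * A 0 0 * (σ * B 0 0))) hbc hqr (by nlinarith) (by linarith) with
    ⟨hb, hc, hq, hr⟩ | ⟨hb, hc, hq, hr⟩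
  · exact h.groupNonElliptic_of_sign hA hB hρ hσ ha hp hb hc (by linarith) (by linarith)
  · obtain ⟨a00, a01, a10, a11⟩ := conj_rotW_entry A
    obtain ⟨b00, b01, b10, b11⟩ := conj_rotW_entry B
    refine GroupNonElliptic.conj rotW ((h.conj rotW).groupNonElliptic_of_sign (ρ := ρ) (σ := σ)
      (by rw [a00, a11, hA]) (by rw [b00, b11, hB]) hρ hσ ?_ ?_ ?_ ?_ ?_ ?_)
    · rw [a00, ← hA]; exact ha
    · rw [b00, ← hB]; exact hp
    · rw [a01]; linarith
    · rw [a10]; linarith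
    · rw [b01]; linarith
    · rw [b10]; linarith

/-- The group generated by a free pair contains no elliptic element. -/
theorem FreePair.groupNonElliptic {p : SL2 × SL2} (h : FreePair p) :
    GroupNonElliptic p.1 p.2 := by
  obtain ⟨A, B⟩ := p
  obtain ⟨P, hA, hB⟩ := exists_conj_diag_eq (A := A) (B := B) (by linarith [h.twPair.2])
  exact GroupNonElliptic.conj P ((h.conj P).groupNonElliptic_of_diag hA hB)

/-- `F₊` and `F₋` do not change the group generated by the pair. -/
lemma groupNonElliptic_of_free_seq (s : List Bool) (p : SL2 × SL2)
    (h : FreePair (applySeq s p)) : GroupNonElliptic p.1 p.2 := by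
  induction s generalizing p with
  | nil => exact h.groupNonElliptic
  | cons e s ih =>
    rw [applySeq_cons] at h
    refine groupNonElliptic_of_closure_le (ih _ h) ?_ ?_
    all_goals
      cases e
      · simp only [Bool.false_eq_true, if_false, Fminus]
        have h1 : p.2 * p.1 ∈ Subgroup.closure {p.2 * p.1, p.2} :=
          Subgroup.subset_closure (by simp)
        have h2 : p.2 ∈ Subgroup.closure {p.2 * p.1, p.2} :=
          Subgroup.subset_closure (by simp)
        first
          | exact h2
          | simpa using mul_mem (inv_mem h2) h1
      · simp only [if_true, Fplus]
        have h1 : p.1 * p.2 ∈ Subgroup.closure {p.1, p.1 * p.2} :=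
          Subgroup.subset_closure (by simp)
        have h2 : p.1 ∈ Subgroup.closure {p.1, p.1 * p.2} :=
          Subgroup.subset_closure (by simp)
        first
          | exact h2
          | simpa using mul_mem (inv_mem h2) h1

lemma not_Epairs_of_free_seq {s : List Bool} {p : SL2 × SL2} (h : FreePair (applySeq s p)) :
    p ∉ Epairs := by
  rw [not_Epairs_iff]
  intro M hM
  refine groupNonElliptic_of_free_seq s p h M ?_
  induction hM using Subsemigroup.closure_induction with
  | mem x hx => exact Subgroup.subset_closure hx
  | mul x y _ _ hx hy => exact mul_mem hx hy

/-! ### Topology of `SL(2,ℝ)` and of the projective line -/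

lemma continuous_entry (i j : Fin 2) : Continuous fun A : SL2 => A i j :=
  (continuous_subtype_val (p := fun A : Matrix (Fin 2) (Fin 2) ℝ => A.det = 1)).matrix_elem i j

lemma continuous_SL2 {X : Type*} [TopologicalSpace X] {f : X → SL2}
    (h : ∀ i j, Continuous fun x => f x i j) : Continuous f :=
  continuous_induced_rng.2 (continuous_matrix h)

lemma continuous_SL2_mul {X : Type*} [TopologicalSpace X] {f g : X → SL2} (hf : Continuous f)
    (hg : Continuous g) : Continuous fun x => f x * g x := by
  refine continuous_SL2 fun i j => ?_
  simp only [mul_entry]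
  have h1 := fun i j => (continuous_entry i j).comp hf
  have h2 := fun i j => (continuous_entry i j).comp hg
  exact ((h1 _ _).mul (h2 _ _)).add ((h1 _ _).mul (h2 _ _))

lemma continuous_SL2_neg : Continuous fun A : SL2 => -A := by
  refine continuous_SL2 fun i j => ?_
  exact (continuous_entry i j).neg

lemma continuous_trace2 : Continuous trace2 := by
  rw [show trace2 = fun A : SL2 => A 0 0 + A 1 1 from funext trace2_eq]
  exact (continuous_entry 0 0).add (continuous_entry 1 1)

lemma mulVec_ne_zero (A : SL2) {v : Fin 2 → ℝ} (hv : v ≠ 0) :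
    (A : Matrix (Fin 2) (Fin 2) ℝ) *ᵥ v ≠ 0 := by
  intro h
  apply hv
  have : ((A⁻¹ * A : SL2) : Matrix (Fin 2) (Fin 2) ℝ) *ᵥ v = 0 := by
    rw [Matrix.SpecialLinearGroup.coe_mul, ← Matrix.mulVec_mulVec, h, Matrix.mulVec_zero]
  simpa using this

lemma projAct_mk (A : SL2) (v : Fin 2 → ℝ) (hv : v ≠ 0) :
    projAct A (Projectivization.mk ℝ v hv) =
      Projectivization.mk ℝ ((A : Matrix (Fin 2) (Fin 2) ℝ) *ᵥ v) (mulVec_ne_zero A hv) := rfl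

lemma mulVec_apply (A : Matrix (Fin 2) (Fin 2) ℝ) (v : Fin 2 → ℝ) (i : Fin 2) :
    (A *ᵥ v) i = A i 0 * v 0 + A i 1 * v 1 := by
  simp [Matrix.mulVec, dotProduct, Fin.sum_univ_two]

/-- A function on the projective line is continuous if it is induced by a continuous function on
nonzero vectors. -/
lemma continuous_P1 {X : Type*} [TopologicalSpace X] {f : P1 → X}
    (h : Continuous fun v : {v : Fin 2 → ℝ // v ≠ 0} => f (Projectivization.mk ℝ v.1 v.2)) :
    Continuous f :=
  continuous_coinduced_dom.2 h

lemma continuous_mk : Continuous fun v : {v : Fin 2 → ℝ // v ≠ 0} =>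
    (Projectivization.mk ℝ v.1 v.2 : P1) :=
  continuous_coinduced_rng

/-- The function `[v] ↦ Q v / |v|²` on the projective line, for homogeneous `Q` of degree two. -/
lemma exists_quadratic (Q : (Fin 2 → ℝ) → ℝ) (hQ : Continuous Q)
    (hQ2 : ∀ (t : ℝ) v, Q (t • v) = t ^ 2 * Q v) : ∃ f : P1 → ℝ, Continuous f ∧
      ∀ v hv, ∃ c > 0, f (Projectivization.mk ℝ v hv) = c * Q v := by
  have hpos : ∀ v : Fin 2 → ℝ, v ≠ 0 → 0 < v 0 ^ 2 + v 1 ^ 2 := by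
    intro v hv
    by_contra h0
    push Not at h0
    apply hv
    have h0' : v 0 ^ 2 = 0 := by nlinarith [sq_nonneg (v 0), sq_nonneg (v 1)]
    have h1' : v 1 ^ 2 = 0 := by nlinarith [sq_nonneg (v 0), sq_nonneg (v 1)]
    ext i
    fin_cases i
    · simpa using h0'
    · simpa using h1'
  let f : P1 → ℝ := Projectivization.lift
    (fun v : {v : Fin 2 → ℝ // v ≠ 0} => (v.1 0 ^ 2 + v.1 1 ^ 2)⁻¹ * Q v.1) (by
      rintro ⟨v, hv⟩ ⟨w, hw⟩ t (h : v = t • w)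
      subst h
      have ht : t ≠ 0 := by rintro rfl; simp at hv
      have hw0 := (hpos w hw).ne'
      simp only [hQ2, Pi.smul_apply, smul_eq_mul]
      rw [show (t * w 0) ^ 2 + (t * w 1) ^ 2 = t ^ 2 * (w 0 ^ 2 + w 1 ^ 2) by ring]
      field_simp)
  refine ⟨f, continuous_P1 ?_, fun v hv => ⟨_, inv_pos.2 (hpos v hv), rfl⟩⟩
  have h0 : ∀ i : Fin 2, Continuous fun v : {v : Fin 2 → ℝ // v ≠ 0} => v.1 i :=
    fun i => (continuous_apply i).comp continuous_subtype_val
  exact ((((h0 0).pow 2).add ((h0 1).pow 2)).inv₀ fun v => (hpos v.1 v.2).ne').mul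
    (hQ.comp continuous_subtype_val)

lemma mk_eq_of_linForm {q v : Fin 2 → ℝ} (hq : q ≠ 0) (hv : v ≠ 0)
    (h0 : linForm (-q 1) (q 0) v = 0) :
    Projectivization.mk ℝ v hv = Projectivization.mk ℝ q hq := by
  rw [linForm_apply] at h0
  symm
  rw [Projectivization.mk_eq_mk_iff']
  have hv' : v 0 ≠ 0 ∨ v 1 ≠ 0 := by
    by_contra h
    push Not at h
    apply hv
    ext i; fin_cases i
    · exact h.1
    · exact h.2
  rcases hv' with hv' | hv'
  · refine ⟨q 0 / v 0, ?_⟩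
    ext i; fin_cases i
    · simp [hv']
    · simp; field_simp; linarith
  · refine ⟨q 1 / v 1, ?_⟩
    ext i; fin_cases i
    · simp; field_simp; linarith
    · simp [hv']

/-- An invariant connected proper subset of the projective line lifts to a cone, on one side of
the line of a missing point, invariant up to sign. -/
lemma exists_sign_of_invariant (I : Set P1) (hI : IsPreconnected I) (q : Fin 2 → ℝ) (hq : q ≠ 0)
    (hqI : Projectivization.mk ℝ q hq ∉ I) (M : SL2) (hM : projAct M '' I ⊆ I) :
    ∃ σ : ℝ, σ ^ 2 = 1 ∧ ∀ v (hv : v ≠ 0), Projectivization.mk ℝ v hv ∈ I →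
      0 < linForm (-q 1) (q 0) v →
      0 < linForm (-q 1) (q 0) (σ • ((M : Matrix (Fin 2) (Fin 2) ℝ) *ᵥ v)) := by
  set ℓ := linForm (-q 1) (q 0) with hℓ
  have hℓ0 : ∀ v (hv : v ≠ 0), Projectivization.mk ℝ v hv ∈ I → ℓ v ≠ 0 :=
    fun v hv hvI h0 => hqI (mk_eq_of_linForm hq hv h0 ▸ hvI)
  have hMI : ∀ v (hv : v ≠ 0), Projectivization.mk ℝ v hv ∈ I →
      ℓ ((M : Matrix (Fin 2) (Fin 2) ℝ) *ᵥ v) ≠ 0 := by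
    intro v hv hvI
    refine hℓ0 _ (mulVec_ne_zero M hv) (hM ⟨_, hvI, ?_⟩)
    rw [projAct_mk]
  obtain ⟨f, hf, hf'⟩ := exists_quadratic
    (fun v => ℓ ((M : Matrix (Fin 2) (Fin 2) ℝ) *ᵥ v) * ℓ v)
    (by
      refine Continuous.mul ?_ (LinearMap.continuous_of_finiteDimensional ℓ)
      exact (LinearMap.continuous_of_finiteDimensional ℓ).comp (by fun_prop))
    (by intro t v; simp only [Matrix.mulVec_smul, map_smul, smul_eq_mul]; ring)
  have hf0 : ∀ x ∈ I, f x ≠ 0 := by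
    intro x
    induction x using Projectivization.ind with
    | h v hv =>
      intro hx
      obtain ⟨c, hc, e⟩ := hf' v hv
      rw [e]
      exact mul_ne_zero hc.ne' (mul_ne_zero (hMI v hv hx) (hℓ0 v hv hx))
  -- by connectedness the sign of `f` on `I` is constant
  have hsign : (∀ x ∈ I, 0 < f x) ∨ (∀ x ∈ I, f x < 0) := by
    by_contra h
    push Not at h
    obtain ⟨⟨x, hx, hx0⟩, ⟨y, hy, hy0⟩⟩ := h
    obtain ⟨z, hz, hz0⟩ := hI.intermediate_value hx hy hf.continuousOn ⟨hx0, hy0⟩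
    exact hf0 z hz hz0
  rcases hsign with h | h
  · refine ⟨1, by norm_num, fun v hv hvI hv0 => ?_⟩
    obtain ⟨c, hc, e⟩ := hf' v hv
    have := h _ hvI
    rw [e] at this
    rw [one_smul]
    exact pos_of_mul_pos_left (pos_of_mul_pos_right this hc.le) hv0.le
  · refine ⟨-1, by norm_num, fun v hv hvI hv0 => ?_⟩
    obtain ⟨c, hc, e⟩ := hf' v hv
    have := h _ hvI
    rw [e] at this
    rw [map_smul, smul_eq_mul]
    have h1 := neg_of_mul_neg_right this hc.le
    have h2 := neg_of_mul_neg_left h1 hv0.le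
    linarith

/-! ### Pairs in the closure of `H₀` -/

/-- An interval mapped into itself by both matrices provides a cone preserved up to sign. -/
lemma exists_cone_of_H0 {p : SL2 × SL2} (hp : p ∈ H0) :
    ∃ (D : Set (Fin 2 → ℝ)) (ℓ : (Fin 2 → ℝ) →ₗ[ℝ] ℝ), D.Nonempty ∧ (∀ v ∈ D, 0 < ℓ v) ∧
      ∀ M ∈ ({p.1, p.2} : Set SL2), ∃ σ : ℝ, σ ^ 2 = 1 ∧
        ∀ v ∈ D, σ • ((M : Matrix (Fin 2) (Fin 2) ℝ) *ᵥ v) ∈ D := by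
  obtain ⟨I, ⟨hIo, hIc, hIn⟩, h1, h2⟩ := hp
  have hM : ∀ M ∈ ({p.1, p.2} : Set SL2), projAct M '' I ⊆ I := by
    rintro M (rfl | hM)
    · exact (Set.image_mono subset_closure).trans h1
    · rw [Set.mem_singleton_iff] at hM
      subst hM
      exact (Set.image_mono subset_closure).trans h2
  obtain ⟨x, hx⟩ := hIn.nonempty
  induction x using Projectivization.ind with
  | h q hq =>
  refine ⟨{v | (∃ hv : v ≠ 0, Projectivization.mk ℝ v hv ∈ I) ∧ 0 < linForm (-q 1) (q 0) v},
    linForm (-q 1) (q 0), ?_, fun v hv => hv.2, ?_⟩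
  · obtain ⟨y, hy⟩ := hIc.nonempty
    induction y using Projectivization.ind with
    | h v hv =>
    have h0 : linForm (-q 1) (q 0) v ≠ 0 := fun h0 => hx (mk_eq_of_linForm hq hv h0 ▸ hy)
    rcases lt_or_gt_of_ne h0 with h0 | h0
    · refine ⟨-v, ⟨neg_ne_zero.2 hv, ?_⟩, by rw [map_neg]; linarith⟩
      convert hy using 1
      rw [Projectivization.mk_eq_mk_iff']
      exact ⟨-1, by simp⟩
    · exact ⟨v, ⟨hv, hy⟩, h0⟩
  · intro M hMp
    obtain ⟨σ, hσ, h⟩ := exists_sign_of_invariant I hIc.isPreconnected q hq hx M (hM M hMp)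
    have hσ0 : σ ≠ 0 := by rintro rfl; norm_num at hσ
    refine ⟨σ, hσ, fun v hv => ?_⟩
    obtain ⟨⟨hv0, hvI⟩, hv1⟩ := hv
    refine ⟨⟨smul_ne_zero hσ0 (mulVec_ne_zero M hv0), ?_⟩, h v hv0 hvI hv1⟩
    convert hM M hMp ⟨_, hvI, rfl⟩ using 1
    rw [projAct_mk, Projectivization.mk_eq_mk_iff']
    exact ⟨σ, rfl⟩

lemma exists_sign_of_mem_closure {p : SL2 × SL2} {D : Set (Fin 2 → ℝ)}
    (h : ∀ M ∈ ({p.1, p.2} : Set SL2), ∃ σ : ℝ, σ ^ 2 = 1 ∧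
        ∀ v ∈ D, σ • ((M : Matrix (Fin 2) (Fin 2) ℝ) *ᵥ v) ∈ D) :
    ∀ M ∈ Subsemigroup.closure {p.1, p.2}, ∃ σ : ℝ, σ ^ 2 = 1 ∧
        ∀ v ∈ D, σ • ((M : Matrix (Fin 2) (Fin 2) ℝ) *ᵥ v) ∈ D := by
  intro M hM
  induction hM using Subsemigroup.closure_induction with
  | mem x hx => exact h x hx
  | mul x y _ _ hx hy =>
    obtain ⟨σ, hσ, h1⟩ := hx
    obtain ⟨τ, hτ, h2⟩ := hy
    refine ⟨σ * τ, by rw [mul_pow, hσ, hτ, one_mul], fun v hv => ?_⟩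
    have := h1 _ (h2 v hv)
    rwa [Matrix.mulVec_smul, Matrix.mulVec_mulVec, smul_smul,
      ← Matrix.SpecialLinearGroup.coe_mul] at this

lemma two_le_abs_of_sign {σ t : ℝ} (hσ : σ ^ 2 = 1) (h : 2 ≤ σ * t) : 2 ≤ |t| := by
  rcases mul_self_eq_one_iff.1 ((sq σ).symm.trans hσ) with rfl | rfl
  · rw [one_mul] at h; exact h.trans (le_abs_self _)
  · rw [neg_one_mul] at h; exact h.trans (neg_le_abs _)

lemma H0_not_Epairs {p : SL2 × SL2} (hp : p ∈ H0) : p ∉ Epairs := by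
  obtain ⟨D, ℓ, hD, hℓ, h⟩ := exists_cone_of_H0 hp
  rw [not_Epairs_iff]
  intro M hM
  obtain ⟨σ, hσ, h1⟩ := exists_sign_of_mem_closure h M hM
  exact two_le_abs_of_sign hσ (two_le_trace_of_cone _ M.det_coe D hD ℓ hℓ σ hσ h1)

/-- The signs `σ_A`, `σ_B` with which `A` and `B` preserve the cone multiply to that of `AB`, and each
is the sign of the corresponding trace. -/
lemma H0_traces_pos {p : SL2 × SL2} (hp : p ∈ H0) :
    0 < trace2 p.1 * trace2 p.2 * trace2 (p.1 * p.2) := by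
  obtain ⟨D, ℓ, hD, hℓ, h⟩ := exists_cone_of_H0 hp
  obtain ⟨σ, hσ, h1⟩ := h p.1 (by simp)
  obtain ⟨τ, hτ, h2⟩ := h p.2 (by simp)
  have hA : 2 ≤ σ * trace2 p.1 := two_le_trace_of_cone _ p.1.det_coe D hD ℓ hℓ σ hσ h1
  have hB : 2 ≤ τ * trace2 p.2 := two_le_trace_of_cone _ p.2.det_coe D hD ℓ hℓ τ hτ h2
  have hAB : 2 ≤ σ * τ * trace2 (p.1 * p.2) := by
    refine two_le_trace_of_cone _ (p.1 * p.2).det_coe D hD ℓ hℓ (σ * τ)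
      (by rw [mul_pow, hσ, hτ, one_mul]) fun v hv => ?_
    have := h1 _ (h2 v hv)
    rwa [Matrix.mulVec_smul, Matrix.mulVec_mulVec, smul_smul,
      ← Matrix.SpecialLinearGroup.coe_mul] at this
  have e : trace2 p.1 * trace2 p.2 * trace2 (p.1 * p.2) =
      (σ * trace2 p.1) * (τ * trace2 p.2) * (σ * τ * trace2 (p.1 * p.2)) := by
    have : σ ^ 2 * τ ^ 2 = 1 := by rw [hσ, hτ, one_mul]
    linear_combination (-(trace2 p.1 * trace2 p.2 * trace2 (p.1 * p.2))) * this
  rw [e]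
  positivity

lemma continuous_pairProd (w : List Bool) : Continuous fun p : SL2 × SL2 => pairProd p.1 p.2 w := by
  induction w with
  | nil => simpa [pairProd] using continuous_const
  | cons b w ih =>
    have e : (fun p : SL2 × SL2 => pairProd p.1 p.2 (b :: w)) =
        fun p => pairProd p.1 p.2 w * (if b then p.1 else p.2) := by
      funext p; simp [pairProd]
    rw [e]
    refine continuous_SL2_mul ih ?_
    cases b
    · simpa using continuous_snd
    · simpa using continuous_fst

lemma closure_H0_not_Epairs {p : SL2 × SL2} (hp : p ∈ closure H0) : p ∉ Epairs := by
  rintro ⟨w, hw, h⟩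
  have hcl : IsClosed {p : SL2 × SL2 | 2 ≤ |trace2 (pairProd p.1 p.2 w)|} :=
    isClosed_le continuous_const (continuous_trace2.comp (continuous_pairProd w)).abs
  have : closure H0 ⊆ {p : SL2 × SL2 | 2 ≤ |trace2 (pairProd p.1 p.2 w)|} := by
    refine closure_minimal (fun q hq => ?_) hcl
    by_contra h0
    exact H0_not_Epairs hq ⟨w, hw, not_le.1 h0⟩
  exact absurd (this hp) (not_le.2 h)

lemma continuous_mulPair : Continuous fun p : SL2 × SL2 => p.1 * p.2 :=
  continuous_SL2_mul continuous_fst continuous_snd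

lemma closure_H0_traces_nonneg {p : SL2 × SL2} (hp : p ∈ closure H0) :
    0 ≤ trace2 p.1 * trace2 p.2 * trace2 (p.1 * p.2) := by
  have hcl : IsClosed {p : SL2 × SL2 | 0 ≤ trace2 p.1 * trace2 p.2 * trace2 (p.1 * p.2)} :=
    isClosed_le continuous_const
      (((continuous_trace2.comp continuous_fst).mul (continuous_trace2.comp continuous_snd)).mul
        (continuous_trace2.comp continuous_mulPair))
  exact closure_minimal (fun q hq => (H0_traces_pos hq).le) hcl hp

lemma projAct_mul (A B : SL2) (x : P1) : projAct (A * B) x = projAct A (projAct B x) := by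
  induction x using Projectivization.ind with
  | h v hv => simp only [projAct_mk, Matrix.SpecialLinearGroup.coe_mul, Matrix.mulVec_mulVec]

lemma image_projAct_mul {A B : SL2} {I : Set P1} (hA : projAct A '' closure I ⊆ I)
    (hB : projAct B '' closure I ⊆ I) : projAct (A * B) '' closure I ⊆ I := by
  rintro _ ⟨x, hx, rfl⟩
  rw [projAct_mul]
  exact hA ⟨_, subset_closure (hB ⟨x, hx, rfl⟩), rfl⟩

/-- The closure of `H0` is invariant under `F₊` and `F₋`. -/
lemma applySeq_closure_H0 (s : List Bool) {p : SL2 × SL2} (hp : p ∈ closure H0) :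
    applySeq s p ∈ closure H0 := by
  induction s generalizing p with
  | nil => exact hp
  | cons e s ih =>
    rw [applySeq_cons]
    apply ih
    cases e
    · refine map_mem_closure (f := Fminus) ?_ hp ?_
      · exact (continuous_SL2_mul continuous_snd continuous_fst).prodMk continuous_snd
      · rintro q ⟨I, hI, h1, h2⟩
        exact ⟨I, hI, image_projAct_mul h2 h1, h2⟩
    · refine map_mem_closure (f := Fplus) ?_ hp ?_
      · exact continuous_fst.prodMk continuous_mulPair
      · rintro q ⟨I, hI, h1, h2⟩
        exact ⟨I, hI, h1, image_projAct_mul h1 h2⟩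

lemma closure_H0_not_free {p : SL2 × SL2} (hp : p ∈ closure H0) (s : List Bool) :
    ¬ FreePair (applySeq s p) := fun h =>
  absurd (closure_H0_traces_nonneg (applySeq_closure_H0 s hp)) (not_le.2 h.2.2.2)

/-! ### Criteria for membership in the closure of `H₀` -/

lemma projAct_one (x : P1) : projAct 1 x = x := by
  induction x using Projectivization.ind with
  | h v hv => simp [projAct_mk]

lemma projAct_neg (A : SL2) : projAct (-A) = projAct A := by
  funext x
  induction x using Projectivization.ind with
  | h v hv =>
    rw [projAct_mk, projAct_mk, Projectivization.mk_eq_mk_iff']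
    exact ⟨-1, by simp [Matrix.neg_mulVec]⟩

lemma continuous_projAct (A : SL2) : Continuous (projAct A) := by
  refine continuous_P1 ?_
  have : Continuous fun v : {v : Fin 2 → ℝ // v ≠ 0} =>
      (⟨(A : Matrix (Fin 2) (Fin 2) ℝ) *ᵥ v.1, mulVec_ne_zero A v.2⟩ :
        {v : Fin 2 → ℝ // v ≠ 0}) :=
    Continuous.subtype_mk (by fun_prop) _
  exact continuous_mk.comp this

lemma projAct_preimage (P : SL2) (I : Set P1) : projAct P ⁻¹' I = projAct P⁻¹ '' I := by
  ext x
  constructor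
  · intro hx
    exact ⟨_, hx, by rw [← projAct_mul, inv_mul_cancel, projAct_one]⟩
  · rintro ⟨y, hy, rfl⟩
    rw [Set.mem_preimage, ← projAct_mul, mul_inv_cancel, projAct_one]
    exact hy

lemma H0_conj {A B : SL2} (P : SL2) (h : (A, B) ∈ H0) : (P⁻¹ * A * P, P⁻¹ * B * P) ∈ H0 := by
  obtain ⟨I, ⟨hIo, hIc, hIn⟩, h1, h2⟩ := h
  have hcl : closure (projAct P ⁻¹' I) ⊆ projAct P ⁻¹' closure I :=
    (continuous_projAct P).closure_preimage_subset I
  have hinv : ∀ M : SL2, projAct M '' closure I ⊆ I →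
      projAct (P⁻¹ * M * P) '' closure (projAct P ⁻¹' I) ⊆ projAct P ⁻¹' I := by
    rintro M hM _ ⟨x, hx, rfl⟩
    rw [Set.mem_preimage, ← projAct_mul, mul_assoc, mul_inv_cancel_left, projAct_mul]
    exact hM ⟨_, hcl hx, rfl⟩
  refine ⟨projAct P ⁻¹' I, ⟨hIo.preimage (continuous_projAct P), ?_, ?_⟩, hinv A h1, hinv B h2⟩
  · rw [projAct_preimage]
    exact hIc.image _ (continuous_projAct _).continuousOn
  · rw [← Set.preimage_compl, projAct_preimage]
    refine hIn.image fun x y hxy => ?_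
    have := congrArg (projAct P) hxy
    simpa only [← projAct_mul, mul_inv_cancel, projAct_one] using this

lemma closure_H0_of_conj {A B : SL2} (P : SL2) (h : (P⁻¹ * A * P, P⁻¹ * B * P) ∈ closure H0) :
    (A, B) ∈ closure H0 := by
  have hc : Continuous fun p : SL2 × SL2 => (P * p.1 * P⁻¹, P * p.2 * P⁻¹) :=
    (continuous_SL2_mul (continuous_SL2_mul continuous_const continuous_fst)
      continuous_const).prodMk
    (continuous_SL2_mul (continuous_SL2_mul continuous_const continuous_snd) continuous_const)
  have := map_mem_closure hc h (t := H0) (fun q hq => by simpa using H0_conj P⁻¹ hq)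
  simpa [mul_assoc] using this

lemma closure_H0_neg_left {A B : SL2} (h : (-A, B) ∈ closure H0) : (A, B) ∈ closure H0 := by
  have hc : Continuous fun p : SL2 × SL2 => (-p.1, p.2) :=
    (continuous_SL2_neg.comp continuous_fst).prodMk continuous_snd
  have := map_mem_closure hc h (t := H0) (by
    rintro q ⟨I, hI, h1, h2⟩
    exact ⟨I, hI, by rw [projAct_neg]; exact h1, h2⟩)
  simpa using this

lemma closure_H0_swap {A B : SL2} (h : (B, A) ∈ closure H0) : (A, B) ∈ closure H0 :=
  map_mem_closure (f := Prod.swap) continuous_swap h (by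
    rintro q ⟨I, hI, h1, h2⟩
    exact ⟨I, hI, h2, h1⟩)

lemma closure_H0_neg_right {A B : SL2} (h : (A, -B) ∈ closure H0) : (A, B) ∈ closure H0 :=
  closure_H0_swap (closure_H0_neg_left (closure_H0_swap h))

lemma closure_H0_of_path (g : ℝ → SL2 × SL2) (hg : Continuous g)
    (h : ∀ t > 0, g t ∈ closure H0) : g 0 ∈ closure H0 := by
  have h0 : (0 : ℝ) ∈ closure (Set.Ioi 0) := by rw [closure_Ioi]; simp
  have := map_mem_closure hg h0 (t := closure H0) h
  rwa [closure_closure] at this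

/-- Matrices with positive entries contract the projectivised first quadrant. -/
lemma H0_of_pos {A B : SL2} (hA : ∀ i j, 0 < A i j) (hB : ∀ i j, 0 < B i j) :
    (A, B) ∈ H0 := by
  obtain ⟨f, hf, hf'⟩ := exists_quadratic (fun v => v 0 * v 1) (by fun_prop)
    (by intro t v; simp only [Pi.smul_apply, smul_eq_mul]; ring)
  have hcl : closure (f ⁻¹' Set.Ioi 0) ⊆ f ⁻¹' Set.Ici 0 :=
    closure_minimal (Set.preimage_mono Set.Ioi_subset_Ici_self) (isClosed_Ici.preimage hf)
  have hmap : ∀ M : SL2, (∀ i j, 0 < M i j) →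
      projAct M '' closure (f ⁻¹' Set.Ioi 0) ⊆ f ⁻¹' Set.Ioi 0 := by
    rintro M hM _ ⟨x, hx, rfl⟩
    replace hx := hcl hx
    induction x using Projectivization.ind with
    | h v hv =>
    obtain ⟨c, hc, e⟩ := hf' v hv
    obtain ⟨c', hc', e'⟩ := hf' _ (mulVec_ne_zero M hv)
    rw [Set.mem_preimage, Set.mem_Ici, e] at hx
    rw [Set.mem_preimage, Set.mem_Ioi, projAct_mk, e']
    have hx0 : 0 ≤ v 0 * v 1 := nonneg_of_mul_nonneg_right hx hc
    refine mul_pos hc' ?_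
    rw [mulVec_apply, mulVec_apply]
    have e2 : (M 0 0 * v 0 + M 0 1 * v 1) * (M 1 0 * v 0 + M 1 1 * v 1) =
        M 0 0 * M 1 0 * v 0 ^ 2 + M 0 1 * M 1 1 * v 1 ^ 2 +
        (M 0 0 * M 1 1 + M 0 1 * M 1 0) * (v 0 * v 1) := by ring
    rw [e2]
    have p1 := mul_pos (hM 0 0) (hM 1 0)
    have p2 := mul_pos (hM 0 1) (hM 1 1)
    have p3 := add_pos (mul_pos (hM 0 0) (hM 1 1)) (mul_pos (hM 0 1) (hM 1 0))
    have hv' : v 0 ≠ 0 ∨ v 1 ≠ 0 := by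
      by_contra h
      push Not at h
      apply hv
      ext i; fin_cases i
      · exact h.1
      · exact h.2
    rcases hv' with hv' | hv' <;> positivity
  refine ⟨f ⁻¹' Set.Ioi 0, ⟨isOpen_Ioi.preimage hf, ?_, ?_⟩, hmap A hA, hmap B hB⟩
  · have e : f ⁻¹' Set.Ioi 0 = (fun t : ℝ => (Projectivization.mk ℝ ![1, t]
        (fun h => one_ne_zero (congrFun h 0)) : P1)) '' Set.Ioi 0 := by
      ext x
      constructor
      · intro hx
        induction x using Projectivization.ind with
        | h v hv =>
        obtain ⟨c, hc, e⟩ := hf' v hv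
        rw [Set.mem_preimage, Set.mem_Ioi, e] at hx
        have hx0 : 0 < v 0 * v 1 := pos_of_mul_pos_right hx hc.le
        have h0 : v 0 ≠ 0 := by rintro h0; simp [h0] at hx0
        refine ⟨v 1 / v 0, ?_, ?_⟩
        · rw [Set.mem_Ioi, show v 1 / v 0 = v 0 * v 1 / v 0 ^ 2 by field_simp]
          positivity
        · rw [Projectivization.mk_eq_mk_iff']
          refine ⟨1 / v 0, ?_⟩
          ext i; fin_cases i
          · simp [h0]
          · simp; field_simp
      · rintro ⟨t, ht, rfl⟩
        obtain ⟨c, hc, e⟩ := hf' ![1, t] (fun h => one_ne_zero (congrFun h 0))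
        rw [Set.mem_preimage, Set.mem_Ioi, e]
        simpa using mul_pos hc ht
    rw [e]
    refine isConnected_Ioi.image _ (Continuous.continuousOn ?_)
    have : Continuous fun t : ℝ => (⟨![1, t], fun h => one_ne_zero (congrFun h 0)⟩ :
        {v : Fin 2 → ℝ // v ≠ 0}) := by
      refine Continuous.subtype_mk ?_ _
      refine continuous_pi fun i => ?_
      fin_cases i
      · exact continuous_const
      · exact continuous_id
    exact continuous_mk.comp this
  · refine ⟨Projectivization.mk ℝ ![1, 0] (fun h => one_ne_zero (congrFun h 0)), ?_,
      Projectivization.mk ℝ ![0, 1] (fun h => one_ne_zero (congrFun h 1)), ?_, ?_⟩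
    · obtain ⟨c, hc, e⟩ := hf' ![1, 0] (fun h => one_ne_zero (congrFun h 0))
      simp [e]
    · obtain ⟨c, hc, e⟩ := hf' ![0, 1] (fun h => one_ne_zero (congrFun h 1))
      simp [e]
    · intro h
      rw [Projectivization.mk_eq_mk_iff'] at h
      obtain ⟨a, ha⟩ := h
      have := congrFun ha 0
      simp at this

/-- The hyperbolic rotation `[[cosh t, sinh t], [sinh t, cosh t]]`. -/
noncomputable def hypRot (t : ℝ) : SL2 :=
  mkSL (Real.cosh t) (Real.sinh t) (Real.sinh t) (Real.cosh t)
    (by rw [← sq, ← sq]; exact Real.cosh_sq_sub_sinh_sq t)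

lemma continuous_hypRot : Continuous hypRot := by
  refine continuous_SL2 fun i j => ?_
  fin_cases i <;> fin_cases j
  · exact Real.continuous_cosh
  · exact Real.continuous_sinh
  · exact Real.continuous_sinh
  · exact Real.continuous_cosh

lemma hypRot_zero : hypRot 0 = 1 := by
  ext i j
  fin_cases i <;> fin_cases j <;> simp [hypRot]

lemma mul_hypRot_pos {A : SL2} (hA : ∀ i j, 0 ≤ A i j) {t : ℝ} (ht : 0 < t) (i j : Fin 2) :
    0 < (A * hypRot t) i j := by
  have hs : 0 < Real.sinh t := Real.sinh_pos_iff.2 ht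
  have hc : 0 < Real.cosh t := Real.cosh_pos t
  have hd := det_eq A
  have hrow : ∀ i, 0 < A i 0 ∨ 0 < A i 1 := by
    intro i
    by_contra h
    push Not at h
    have h0 : A i 0 = 0 := le_antisymm h.1 (hA i 0)
    have h1 : A i 1 = 0 := le_antisymm h.2 (hA i 1)
    fin_cases i <;> simp at h0 h1 <;> simp [h0, h1] at hd
  have h0 := hA i 0
  have h1 := hA i 1
  rw [mul_entry]
  fin_cases j <;> simp [hypRot] <;> rcases hrow i with h | h <;> positivity

/-- Right multiplication by hyperbolic rotations turns nonnegative entries into positive ones. -/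
lemma closure_H0_of_nonneg {A B : SL2} (hA : ∀ i j, 0 ≤ A i j) (hB : ∀ i j, 0 ≤ B i j) :
    (A, B) ∈ closure H0 := by
  have := closure_H0_of_path (fun t => (A * hypRot t, B * hypRot t))
    ((continuous_SL2_mul continuous_const continuous_hypRot).prodMk
      (continuous_SL2_mul continuous_const continuous_hypRot))
    (fun t ht => subset_closure (H0_of_pos (mul_hypRot_pos hA ht) (mul_hypRot_pos hB ht)))
  simpa only [hypRot_zero, mul_one] using this

/-- Nonnegative diagonals and off-diagonal entries all of one sign. -/
lemma closure_H0_of_sign {A B : SL2} (s : ℝ) (hs : s ≠ 0) (a0 : 0 ≤ A 0 0) (a1 : 0 ≤ A 1 1)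
    (b0 : 0 ≤ B 0 0) (b1 : 0 ≤ B 1 1) (a01 : 0 ≤ s * A 0 1) (a10 : 0 ≤ s * A 1 0)
    (b01 : 0 ≤ s * B 0 1) (b10 : 0 ≤ s * B 1 0) : (A, B) ∈ closure H0 := by
  rcases lt_or_gt_of_ne hs with hs | hs
  · apply closure_H0_of_conj rotW
    obtain ⟨e1, e2, e3, e4⟩ := conj_rotW_entry A
    obtain ⟨f1, f2, f3, f4⟩ := conj_rotW_entry B
    have key : ∀ {u : ℝ}, 0 ≤ s * u → 0 ≤ -u := by
      intro u hu
      by_contra h0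
      push Not at h0
      nlinarith
    apply closure_H0_of_nonneg <;> intro i j <;> fin_cases i <;> fin_cases j
    · exact e1 ▸ a1
    · exact e2 ▸ key a10
    · exact e3 ▸ key a01
    · exact e4 ▸ a0
    · exact f1 ▸ b1
    · exact f2 ▸ key b10
    · exact f3 ▸ key b01
    · exact f4 ▸ b0
  · have key : ∀ {u : ℝ}, 0 ≤ s * u → 0 ≤ u := fun hu => nonneg_of_mul_nonneg_right hu hs
    apply closure_H0_of_nonneg <;> intro i j <;> fin_cases i <;> fin_cases j
    · exact a0
    · exact key a01
    · exact key a10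
    · exact a1
    · exact b0
    · exact key b01
    · exact key b10
    · exact b1

/-! ### Untwisted pairs without elliptic entries -/

/-- The case of a diagonal hyperbolic `A` with positive trace; the condition says that `(A, B)` is
not twisted. -/
lemma closure_H0_of_diag {A B : SL2} (h01 : A 0 1 = 0) (h10 : A 1 0 = 0) (hlt : A 1 1 < A 0 0)
    (hpos : 0 < A 1 1) (hy : 2 ≤ trace2 B)
    (h : trace2 A * trace2 B ≤ 2 * trace2 (A * B) ∨ commInv (A, B) ≤ 0) :
    (A, B) ∈ closure H0 := by
  have dA := det_eq A
  have dB := det_eq B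
  have hinv : commInv (A, B) = -(B 0 1 * B 1 0) * (A 0 0 - A 1 1) ^ 2 := by
    rw [commInv_eq, h01, h10]; ring
  have hz : trace2 A * trace2 B - 2 * trace2 (A * B) =
      (A 0 0 - A 1 1) * (B 1 1 - B 0 0) := by
    simp only [trace2_eq, mul_entry, h01, h10]; ring
  rw [trace2_eq] at hy
  have hd : 0 < A 0 0 - A 1 1 := by linarith
  by_cases hβγ : 0 ≤ B 0 1 * B 1 0
  · have hprod : 0 < B 0 0 * B 1 1 := by linarith
    have hpq : 0 < B 0 0 ∧ 0 < B 1 1 := by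
      rcases mul_pos_iff.1 hprod with h | h
      · exact h
      · linarith
    obtain ⟨s, hs, hs1, hs2⟩ : ∃ s : ℝ, s ≠ 0 ∧ 0 ≤ s * B 0 1 ∧ 0 ≤ s * B 1 0 := by
      rcases mul_nonneg_iff.1 hβγ with ⟨h1, h2⟩ | ⟨h1, h2⟩
      · exact ⟨1, by norm_num, by linarith, by linarith⟩
      · exact ⟨-1, by norm_num, by linarith, by linarith⟩
    exact closure_H0_of_sign s hs (by linarith) hpos.le hpq.1.le hpq.2.le (by simp [h01])
      (by simp [h10]) hs1 hs2
  · have hβ : B 0 1 ≠ 0 := by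
      intro h0
      simp [h0] at hβγ
    push Not at hβγ
    have hle : B 1 1 ≤ B 0 0 := by
      rcases h with h | h
      · by_contra h0
        push Not at h0
        linarith [mul_pos hd (sub_pos.2 h0)]
      · rw [hinv] at h
        linarith [mul_pos (neg_pos.2 hβγ) (pow_pos hd 2)]
    -- a shear making the diagonal entries of `B` equal
    apply closure_H0_of_conj (mkSL 1 0 ((B 1 1 - B 0 0) / (2 * B 0 1)) 1 (by norm_num))
    obtain ⟨a00, a01, a10, a11⟩ :=
      conj_entry (mkSL 1 0 ((B 1 1 - B 0 0) / (2 * B 0 1)) 1 (by norm_num)) A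
    obtain ⟨b00, b01, b10, b11⟩ :=
      conj_entry (mkSL 1 0 ((B 1 1 - B 0 0) / (2 * B 0 1)) 1 (by norm_num)) B
    simp only [mkSL_00, mkSL_01, mkSL_10, mkSL_11, h01, h10] at a00 a01 a10 a11 b00 b01 b10 b11
    have hcancel : B 0 1 * ((B 1 1 - B 0 0) / (2 * B 0 1)) = (B 1 1 - B 0 0) / 2 := by
      field_simp
    refine closure_H0_of_sign (B 0 1) hβ ?_ ?_ ?_ ?_ ?_ ?_ ?_ ?_
    · rw [a00]; linarith
    · rw [a11]; linarith
    · rw [b00]; linarith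
    · rw [b11]; linarith
    · rw [a01]; simp
    · rw [a10]
      have : B 0 1 * (1 * (0 * 1 + A 1 1 * ((B 1 1 - B 0 0) / (2 * B 0 1))) -
          (B 1 1 - B 0 0) / (2 * B 0 1) * (A 0 0 * 1 + 0 * ((B 1 1 - B 0 0) / (2 * B 0 1)))) =
          (A 0 0 - A 1 1) * (B 0 0 - B 1 1) / 2 := by field_simp; ring
      rw [this]
      have := mul_nonneg hd.le (sub_nonneg.2 hle)
      linarith
    · rw [b01]; nlinarith [mul_self_nonneg (B 0 1)]
    · rw [b10]
      have : B 0 1 * (1 * (B 1 0 * 1 + B 1 1 * ((B 1 1 - B 0 0) / (2 * B 0 1))) -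
          (B 1 1 - B 0 0) / (2 * B 0 1) *
            (B 0 0 * 1 + B 0 1 * ((B 1 1 - B 0 0) / (2 * B 0 1)))) =
          ((B 0 0 + B 1 1) ^ 2 - 4 * (B 0 0 * B 1 1 - B 0 1 * B 1 0)) / 4 := by
        field_simp; ring
      rw [this, dB]
      nlinarith

lemma commInv_conj (P A B : SL2) : commInv (P⁻¹ * A * P, P⁻¹ * B * P) = commInv (A, B) := by
  simp only [commInv]
  rw [conj_mul_conj, trace2_conj, trace2_conj, trace2_conj]

/-- The case of hyperbolic `A` with positive traces, by diagonalising `A`. -/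
lemma closure_H0_of_hyp {A B : SL2} (hx : 2 < trace2 A) (hy : 2 ≤ trace2 B)
    (h : trace2 A * trace2 B ≤ 2 * trace2 (A * B) ∨ commInv (A, B) ≤ 0) :
    (A, B) ∈ closure H0 := by
  have dA := det_eq A
  have hx' := hx
  rw [trace2_eq] at hx'
  obtain ⟨P, h1, h2⟩ := exists_diag (A 0 0) (A 0 1) (A 1 0) (A 1 1) (by rw [dA]; nlinarith)
  apply closure_H0_of_conj P
  have e01 := (conj_entry P A).2.1.trans h1
  have e10 := (conj_entry P A).2.2.1.trans h2
  rw [← trace2_conj P A, ← trace2_conj P B, ← trace2_conj P (A * B), ← conj_mul_conj,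
    ← commInv_conj P] at h
  rw [← trace2_conj P] at hx hy
  generalize P⁻¹ * A * P = A at *
  generalize P⁻¹ * B * P = B at *
  clear h1 h2 hx' dA
  have dA := det_eq A
  rw [e01, zero_mul, sub_zero] at dA
  have hx' := hx
  rw [trace2_eq] at hx'
  have hpos : 0 < A 0 0 ∧ 0 < A 1 1 := by
    rcases mul_pos_iff.1 (zero_lt_one.trans_eq dA.symm) with h | h
    · exact h
    · linarith
  rcases lt_trichotomy (A 1 1) (A 0 0) with hlt | heq | hlt
  · exact closure_H0_of_diag e01 e10 hlt hpos.2 hy h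
  · rw [heq] at dA hx'; nlinarith
  · apply closure_H0_of_conj rotW
    obtain ⟨a00, a01, a10, a11⟩ := conj_rotW_entry A
    refine closure_H0_of_diag (by rw [a01, e10, neg_zero]) (by rw [a10, e01, neg_zero])
      (by rw [a00, a11]; exact hlt) (by rw [a11]; exact hpos.1) (by rwa [trace2_conj]) ?_
    rwa [conj_mul_conj, trace2_conj, trace2_conj, trace2_conj, commInv_conj]

/-- The case of upper triangular unipotent `A` and `tr B = 2`. -/
lemma closure_H0_of_unipotent {A B : SL2} (h00 : A 0 0 = 1) (h11 : A 1 1 = 1) (h10 : A 1 0 = 0)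
    (hy : trace2 B = 2) (hz : 2 ≤ trace2 (A * B)) : (A, B) ∈ closure H0 := by
  have dB := det_eq B
  have hy' := hy
  rw [trace2_eq] at hy'
  have hz' : 0 ≤ A 0 1 * B 1 0 := by
    simp only [trace2_eq, mul_entry, h00, h11, h10] at hz
    linarith
  by_cases hγ : B 1 0 = 0
  · have hB11 : B 1 1 = 2 - B 0 0 := by linarith
    have hB00 : B 0 0 = 1 := by
      rw [hγ, hB11] at dB
      nlinarith [sq_nonneg (B 0 0 - 1)]
    -- perturb `B` to a hyperbolic matrix fixing the same direction
    let g : ℝ → SL2 := fun t => mkSL (Real.exp t) (B 0 1) 0 (Real.exp (-t))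
      (by rw [← Real.exp_add]; simp)
    have hg : Continuous g := by
      refine continuous_SL2 fun i j => ?_
      fin_cases i <;> fin_cases j
      · exact Real.continuous_exp
      · exact continuous_const
      · exact continuous_const
      · exact Real.continuous_exp.comp continuous_neg
    have hg0 : g 0 = B := by
      ext i j
      fin_cases i <;> fin_cases j <;> simp [g, hγ, hB00, hB11]
      norm_num
    have := closure_H0_of_path (fun t => (A, g t)) (continuous_const.prodMk hg) (by
      intro t ht
      apply closure_H0_swap
      have e : trace2 (g t * A) = trace2 (g t) := by
        simp only [trace2_eq, mul_entry, h00, h11, h10, g, mkSL_00, mkSL_01, mkSL_10, mkSL_11]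
        ring
      refine closure_H0_of_hyp ?_ (by rw [trace2_eq, h00, h11]; norm_num) (Or.inl ?_)
      · have h1 : trace2 (g t) = 2 * Real.cosh t := by
          rw [Real.cosh_eq, trace2_eq]
          simp only [g, mkSL_00, mkSL_11]
          ring
        rw [h1]
        linarith [Real.one_lt_cosh.2 ht.ne']
      · rw [e, trace2_eq A, h00, h11]
        linarith)
    rwa [hg0] at this
  · have hP : (1 : ℝ) * 1 - (B 0 0 - 1) / B 1 0 * 0 = 1 := by norm_num
    apply closure_H0_of_conj (mkSL 1 ((B 0 0 - 1) / B 1 0) 0 1 hP)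
    obtain ⟨a00, a01, a10, a11⟩ := conj_entry (mkSL 1 ((B 0 0 - 1) / B 1 0) 0 1 hP) A
    obtain ⟨b00, b01, b10, b11⟩ := conj_entry (mkSL 1 ((B 0 0 - 1) / B 1 0) 0 1 hP) B
    simp only [mkSL_00, mkSL_01, mkSL_10, mkSL_11, h00, h11, h10] at a00 a01 a10 a11 b00 b01 b10 b11
    have hB11 : B 1 1 = 2 - B 0 0 := by linarith
    have hcancel : B 1 0 * ((B 0 0 - 1) / B 1 0) = B 0 0 - 1 := by field_simp
    generalize (B 0 0 - 1) / B 1 0 = s at *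
    refine closure_H0_of_sign (B 1 0) hγ ?_ ?_ ?_ ?_ ?_ ?_ ?_ ?_
    · rw [a00]; norm_num
    · rw [a11]; norm_num
    · rw [b00]; linarith
    · rw [b11]; linarith
    · rw [a01]; linarith
    · rw [a10]; simp
    · rw [b01]
      apply le_of_eq
      rw [hB11] at dB ⊢
      linear_combination (B 1 0 * s - (B 0 0 - 1)) * hcancel + dB
    · rw [b10]; nlinarith [mul_self_nonneg (B 1 0)]

/-- The case where both traces are `2`, by making `A` upper triangular. -/
lemma closure_H0_of_parabolic {A B : SL2} (hx : trace2 A = 2) (hy : trace2 B = 2)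
    (hz : 2 ≤ trace2 (A * B)) : (A, B) ∈ closure H0 := by
  obtain ⟨P, hP⟩ : ∃ P : SL2, (P⁻¹ * A * P) 1 0 = 0 := by
    by_cases hc : A 1 0 = 0
    · exact ⟨1, by simpa using hc⟩
    · have dA := det_eq A
      rw [trace2_eq] at hx
      -- the first column is an eigenvector of `A`
      refine ⟨mkSL (A 0 0 - 1) (-1 / A 1 0) (A 1 0) 0 (by field_simp; ring), ?_⟩
      rw [(conj_entry _ A).2.2.1]
      simp only [mkSL_00, mkSL_10]
      linear_combination (A 1 0) * dA + (-(A 1 0)) * hx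
  apply closure_H0_of_conj P
  rw [← trace2_conj P, ← conj_mul_conj] at hz
  rw [← trace2_conj P] at hx hy
  generalize P⁻¹ * A * P = A at *
  generalize P⁻¹ * B * P = B at *
  have dA := det_eq A
  have hx' := hx
  rw [trace2_eq] at hx'
  have h11 : A 1 1 = 2 - A 0 0 := by linarith
  rw [hP, h11] at dA
  have h00 : A 0 0 = 1 := by nlinarith [sq_nonneg (A 0 0 - 1)]
  exact closure_H0_of_unipotent h00 (by rw [h11, h00]; norm_num) hP hy hz

lemma closure_H0_of_trace_pos {A B : SL2} (hx : 2 ≤ trace2 A) (hy : 2 ≤ trace2 B)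
    (h : ¬ TwPair (A, B)) : (A, B) ∈ closure H0 := by
  have hxy : 0 < trace2 A * trace2 B := by positivity
  have h' : trace2 A * trace2 B ≤ 2 * trace2 (A * B) ∨ commInv (A, B) ≤ 0 := by
    by_contra h0
    push Not at h0
    refine h ⟨hx.trans (le_abs_self _), hy.trans (le_abs_self _), ?_, h0.2⟩
    have := mul_lt_mul_of_pos_left h0.1 hxy
    linarith
  rcases hx.lt_or_eq with hx2 | hx2
  · exact closure_H0_of_hyp hx2 hy h'
  · rcases hy.lt_or_eq with hy2 | hy2
    · apply closure_H0_swap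
      refine closure_H0_of_hyp hy2 hx ?_
      have e : commInv (B, A) = commInv (A, B) := by
        simp only [commInv, trace2_mul_comm B A]; ring
      rwa [mul_comm, trace2_mul_comm, e]
    · refine closure_H0_of_parabolic hx2.symm hy2.symm ?_
      rw [commInv] at h'
      simp only [← hx2, ← hy2] at h'
      rcases h' with h' | h'
      · linarith
      · nlinarith [sq_nonneg (trace2 (A * B) - 2)]

lemma trace2_neg (A : SL2) : trace2 (-A) = -trace2 A := by
  simp [trace2]

/-- A pair of non-elliptic matrices which is not twisted lies in the closure of `H0`. -/
theorem closure_H0_of_not_twPair {p : SL2 × SL2} (hx : 2 ≤ |trace2 p.1|) (hy : 2 ≤ |trace2 p.2|)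
    (h : ¬ TwPair p) : p ∈ closure H0 := by
  obtain ⟨A, B⟩ := p
  have key : ∀ A B : SL2, 2 ≤ trace2 A → 2 ≤ |trace2 B| → ¬ TwPair (A, B) →
      (A, B) ∈ closure H0 := by
    intro A B hx hy h
    rcases le_abs'.1 hy with hy | hy
    · apply closure_H0_neg_right
      refine closure_H0_of_trace_pos hx (by rw [trace2_neg]; linarith) ?_
      rwa [TwPair, mul_neg, trace2_neg, trace2_neg, twTriple_neg_right]
    · exact closure_H0_of_trace_pos hx hy h
  rcases le_abs'.1 hx with hx | hx
  · apply closure_H0_neg_left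
    refine key _ _ (by rw [trace2_neg]; linarith) hy ?_
    rwa [TwPair, neg_mul, trace2_neg, trace2_neg, twTriple_neg_left]
  · exact key _ _ hx hy h

/-! ### The trichotomy -/

theorem trichotomy_and_local_finiteness :
    (∀ p : SL2 × SL2,
      (((p ∈ Epairs) ∨ p ∈ closure H0 ∨
          ∃ s : List Bool, FreePair (applySeq s p)) ∧
        ¬(p ∈ Epairs ∧ p ∈ closure H0) ∧
        ¬(p ∈ Epairs ∧ ∃ s : List Bool, FreePair (applySeq s p)) ∧
        ¬(p ∈ closure H0 ∧ ∃ s : List Bool, FreePair (applySeq s p))) ∧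
      ∀ s t : List Bool, FreePair (applySeq s p) → FreePair (applySeq t p) →
        s = t) ∧
    (∀ K : Set (SL2 × SL2), IsCompact K →
      {s : List Bool | ∃ p ∈ K, FreePair (applySeq s p)}.Finite) := by
  refine ⟨fun p => ⟨⟨?_, ?_, ?_, ?_⟩, fun s t hs ht => free_seq_unique s t p hs ht⟩, ?_⟩
  · by_cases hE : p ∈ Epairs
    · exact Or.inl hE
    · refine Or.inr ?_
      by_cases hT : TwPair p
      · exact Or.inr (exists_free_seq hE hT)
      · obtain ⟨hx, hy, -⟩ := traces_of_not_Epairs hE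
        exact Or.inl (closure_H0_of_not_twPair hx hy hT)
  · rintro ⟨hE, hH⟩
    exact closure_H0_not_Epairs hH hE
  · rintro ⟨hE, s, hs⟩
    exact not_Epairs_of_free_seq hs hE
  · rintro ⟨hH, s, hs⟩
    exact closure_H0_not_free hH s hs
  · intro K hK
    obtain ⟨M₁, h1⟩ := hK.exists_bound_of_continuousOn
      (continuous_trace2.comp continuous_fst).continuousOn
    obtain ⟨M₂, h2⟩ := hK.exists_bound_of_continuousOn
      (continuous_trace2.comp continuous_snd).continuousOn
    obtain ⟨N, hN⟩ := exists_nat_ge (2 * (max M₁ M₂) * (max M₁ M₂) ^ 2)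
    refine (List.finite_length_le Bool N).subset ?_
    rintro s ⟨p, hp, hs⟩
    have k1 : |trace2 p.1| ≤ max M₁ M₂ := (h1 p hp).trans (le_max_left _ _)
    have k2 : |trace2 p.2| ≤ max M₁ M₂ := (h2 p hp).trans (le_max_right _ _)
    have k3 := free_seq_length _ s p hs k1 k2
    have k4 : (|trace2 p.1| + |trace2 p.2|) * (max M₁ M₂) ^ 2 ≤
        2 * (max M₁ M₂) * (max M₁ M₂) ^ 2 := by
      gcongr
      linarith
    have k5 : (s.length : ℝ) ≤ N := by
      have : (0 : ℝ) ≤ s.length := by positivity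
      linarith
    exact_mod_cast k5
end

section
/- Fix n ≥ 1 and matrices B₁,…,Bₙ ∈ SL(2,ℝ), and define F : ℝ → ℝ by F(θ) = tr(B₁ R_θ B₂ R_θ ⋯ Bₙ R_θ), where R_θ is the rotation matrix with rows (cos θ, sin θ) and (−sin θ, cos θ). Then F is differentiable, and for every θ ∈ ℝ with |F(θ)| < 2 one has F′(θ) ≠ 0. -/
/-!
Write `A_i = B_i R_θ` and `M = A₁ ⋯ Aₙ`. Since `R_θ' = R_θ J` with `J` the quarter turn, Leibniz' rule gives
`M' = M X` with `X = ∑ T_i⁻¹ J T_i`, where `T_i = A_{i+1} ⋯ Aₙ` has determinant one. Hence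
`F' = tr (M X) = ∑ tr (T_i M T_i⁻¹ J)`.

An elliptic `N = (a b; c d)` of determinant one has `bc < 0`, so the entry `c` is nonzero; its sign is the
direction in which `N` turns the plane. It is invariant under conjugation in `SL(2,ℝ)`, because
`c` is the value at `e₁` of the definite form `v ↦ det (v, N v)` (`TurnsLeft.conj`), and it is
also the sign of `tr (N J) = c - b` (`TurnsLeft.trace_mul_pos`). Therefore all summands of `F'`
have the same sign as the lower left entry of `M`, and `F' ≠ 0`. Formally, the matrices `X`
that pair positively with every matrix turning left form a set closed under addition and
conjugation (`DualTurnsLeft`), and induction on the number of factors shows that the logarithmic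
derivative of a nonempty product belongs to it (`exists_logDeriv`).
-/

open Matrix

/-- The rotation matrix with rows `(cos θ, sin θ)` and `(−sin θ, cos θ)`. -/
noncomputable def rot (θ : ℝ) : Matrix (Fin 2) (Fin 2) ℝ :=
  !![Real.cos θ, Real.sin θ; -Real.sin θ, Real.cos θ]

/-! ### The sense of turning of elliptic matrices -/

/-- The infinitesimal generator of `θ ↦ rot θ`. -/
def rotGen : Matrix (Fin 2) (Fin 2) ℝ := !![0, 1; -1, 0]

/-- Elliptic matrices of determinant one with positive lower left entry: those conjugate in
`SL(2,ℝ)` to a rotation by an angle in `(0, π)` counterclockwise. -/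
def TurnsLeft (N : Matrix (Fin 2) (Fin 2) ℝ) : Prop :=
  N.det = 1 ∧ |N.trace| < 2 ∧ 0 < N 1 0

/-- Matrices `X` with `tr (N X) > 0` for every `N` turning left: the strict dual cone for the
trace pairing. -/
def DualTurnsLeft (X : Matrix (Fin 2) (Fin 2) ℝ) : Prop :=
  ∀ N, TurnsLeft N → 0 < (N * X).trace

lemma DualTurnsLeft.add {X Y : Matrix (Fin 2) (Fin 2) ℝ} (hX : DualTurnsLeft X)
    (hY : DualTurnsLeft Y) : DualTurnsLeft (X + Y) := by
  intro N hN
  rw [mul_add, Matrix.trace_add]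
  exact add_pos (hX N hN) (hY N hN)

/-- The discriminant of the form `v ↦ det (v, N v)` is negative for elliptic `N`. -/
lemma disc_neg {N : Matrix (Fin 2) (Fin 2) ℝ} (hd : N.det = 1) (ht : |N.trace| < 2) :
    (N 1 1 - N 0 0) ^ 2 + 4 * (N 0 1 * N 1 0) < 0 := by
  rw [Matrix.det_fin_two] at hd
  rw [Matrix.trace_fin_two, abs_lt] at ht
  nlinarith [mul_pos (sub_pos.2 ht.1) (sub_pos.2 ht.2)]

lemma TurnsLeft.trace_mul_pos {N : Matrix (Fin 2) (Fin 2) ℝ} (hN : TurnsLeft N) :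
    0 < (N * rotGen).trace := by
  obtain ⟨hd, ht, hc⟩ := hN
  have h := disc_neg hd ht
  have hb : N 0 1 < 0 := by
    by_contra! hb
    nlinarith [mul_nonneg hb hc.le, sq_nonneg (N 1 1 - N 0 0)]
  simp only [Matrix.trace_fin_two, Matrix.mul_apply, Fin.sum_univ_two, rotGen, Matrix.of_apply,
    Matrix.cons_val', Matrix.cons_val_zero, Matrix.cons_val_one, Matrix.cons_val_fin_one]
  linarith

/-- The sense of turning is invariant under conjugation in `SL(2,ℝ)`; `T.adjugate` is `T⁻¹` since
`det T = 1`. -/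
lemma TurnsLeft.conj {N T : Matrix (Fin 2) (Fin 2) ℝ} (hN : TurnsLeft N) (hT : T.det = 1) :
    TurnsLeft (T * N * T.adjugate) := by
  obtain ⟨hd, ht, hc⟩ := hN
  refine ⟨?_, ?_, ?_⟩
  · rw [Matrix.det_mul, Matrix.det_mul, Matrix.det_adjugate, hT, hd]; simp
  · rwa [Matrix.trace_mul_comm, ← mul_assoc, Matrix.adjugate_mul, hT, one_smul, one_mul]
  · have h := disc_neg hd ht
    -- the lower left entry is the form `v ↦ det (v, N v)` at `v = T⁻¹ e₁ = (T₁₁, -T₁₀)`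
    have key : (T * N * T.adjugate) 1 0 = N 1 0 * T 1 1 ^ 2
        - (N 1 1 - N 0 0) * (T 1 1 * T 1 0) - N 0 1 * T 1 0 ^ 2 := by
      simp only [Matrix.mul_apply, Fin.sum_univ_two, Matrix.adjugate_fin_two, Matrix.of_apply,
        Matrix.cons_val', Matrix.cons_val_zero, Matrix.cons_val_one, Matrix.cons_val_fin_one]
      ring
    rw [key]
    refine pos_of_mul_pos_right (a := 4 * N 1 0) ?_ (by positivity)
    have hsq : 4 * N 1 0 * (N 1 0 * T 1 1 ^ 2 - (N 1 1 - N 0 0) * (T 1 1 * T 1 0)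
        - N 0 1 * T 1 0 ^ 2) = (2 * N 1 0 * T 1 1 - (N 1 1 - N 0 0) * T 1 0) ^ 2
        + -((N 1 1 - N 0 0) ^ 2 + 4 * (N 0 1 * N 1 0)) * T 1 0 ^ 2 := by ring
    -- completing the square shows positivity, as `T` has nonzero bottom row
    rw [hsq]
    rcases eq_or_ne (T 1 0) 0 with h0 | h0
    · have h1 : T 1 1 ≠ 0 := by
        rintro h1
        rw [Matrix.det_fin_two, h0, h1] at hT
        simp at hT
      have := hc.ne'
      rw [h0]
      simp only [mul_zero, sub_zero]
      have : 0 < (2 * N 1 0 * T 1 1) ^ 2 := by positivity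
      simpa using this
    · have := neg_pos.2 h
      positivity

lemma DualTurnsLeft.conj_rotGen {T : Matrix (Fin 2) (Fin 2) ℝ} (hT : T.det = 1) :
    DualTurnsLeft (T.adjugate * rotGen * T) := by
  intro N hN
  have h := (hN.conj hT).trace_mul_pos
  rw [mul_assoc, mul_assoc, Matrix.trace_mul_comm] at h
  simpa only [mul_assoc] using h

/-! ### Derivative of the product -/

lemma hasDerivAt_rot (θ : ℝ) (i j : Fin 2) :
    HasDerivAt (fun t => rot t i j) ((rot θ * rotGen) i j) θ := by
  have hs := Real.hasDerivAt_sin θ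
  have hc := Real.hasDerivAt_cos θ
  fin_cases i <;> fin_cases j <;>
    simp [rot, rotGen, Matrix.mul_apply, Fin.sum_univ_two] <;>
    first | exact hs | exact hc | exact hs.neg

/-- Entrywise Leibniz rule for matrix products. -/
lemma hasDerivAt_mul_entry {P Q : ℝ → Matrix (Fin 2) (Fin 2) ℝ}
    {P' Q' : Matrix (Fin 2) (Fin 2) ℝ} {θ : ℝ}
    (hP : ∀ i j, HasDerivAt (fun t => P t i j) (P' i j) θ)
    (hQ : ∀ i j, HasDerivAt (fun t => Q t i j) (Q' i j) θ) (i j : Fin 2) :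
    HasDerivAt (fun t => (P t * Q t) i j) ((P' * Q θ + P θ * Q') i j) θ := by
  simp only [Matrix.mul_apply, Matrix.add_apply, ← Finset.sum_add_distrib]
  exact HasDerivAt.fun_sum fun k _ => (hP i k).mul (hQ k j)

/-- The product `B₁ R_θ ⋯ Bₙ R_θ`. -/
noncomputable def rotProd (l : List SL2) (θ : ℝ) : Matrix (Fin 2) (Fin 2) ℝ :=
  (l.map fun B : SL2 => (B : Matrix (Fin 2) (Fin 2) ℝ) * rot θ).prod

lemma rotProd_cons (B : SL2) (l : List SL2) (θ : ℝ) :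
    rotProd (B :: l) θ = (B : Matrix (Fin 2) (Fin 2) ℝ) * rot θ * rotProd l θ := by
  simp [rotProd]

lemma det_rot (θ : ℝ) : (rot θ).det = 1 := by
  rw [rot, Matrix.det_fin_two_of]
  linarith [Real.sin_sq_add_cos_sq θ]

lemma det_rotProd (l : List SL2) (θ : ℝ) : (rotProd l θ).det = 1 := by
  induction l with
  | nil => simp [rotProd]
  | cons B l ih => rw [rotProd_cons, Matrix.det_mul, Matrix.det_mul, ih, det_rot, B.2]; simp

lemma hasDerivAt_factor (B : SL2) (θ : ℝ) (i j : Fin 2) :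
    HasDerivAt (fun t => ((B : Matrix (Fin 2) (Fin 2) ℝ) * rot t) i j)
      (((B : Matrix (Fin 2) (Fin 2) ℝ) * rot θ * rotGen) i j) θ := by
  have h := hasDerivAt_mul_entry (P := fun _ => (B : Matrix (Fin 2) (Fin 2) ℝ)) (P' := 0)
    (fun i j => hasDerivAt_const θ _) (hasDerivAt_rot θ) i j
  simpa [mul_assoc] using h

/-- The logarithmic derivative `M⁻¹ M'` of a nonempty product `M = B₁ R_θ ⋯ Bₙ R_θ` is a sum of
conjugates of `rotGen`, hence pairs positively with matrices turning left. -/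
lemma exists_logDeriv (B : SL2) (l : List SL2) (θ : ℝ) :
    ∃ X, DualTurnsLeft X ∧ ∀ i j, HasDerivAt (fun t => rotProd (B :: l) t i j)
      ((rotProd (B :: l) θ * X) i j) θ := by
  induction l generalizing B with
  | nil =>
    refine ⟨rotGen, fun N hN => hN.trace_mul_pos, fun i j => ?_⟩
    simpa [rotProd] using hasDerivAt_factor B θ i j
  | cons C l ih =>
    obtain ⟨X, hX, hD⟩ := ih C
    have hdet := det_rotProd (C :: l) θ
    refine ⟨(rotProd (C :: l) θ).adjugate * rotGen * rotProd (C :: l) θ + X,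
      (DualTurnsLeft.conj_rotGen hdet).add hX, fun i j => ?_⟩
    have h := hasDerivAt_mul_entry (hasDerivAt_factor B θ) hD i j
    simp only [rotProd_cons B]
    convert h using 2
    generalize rotProd (C :: l) θ = T at *
    have hinv : T * T.adjugate = 1 := by rw [Matrix.mul_adjugate, hdet, one_smul]
    rw [mul_add]
    -- `A J T + A (T X) = A T (T⁻¹ J T + X)` for the first factor `A` and the remaining product `T`
    simp only [mul_assoc]
    rw [← mul_assoc T T.adjugate, hinv, one_mul]

/-- An element of the dual cone pairs nontrivially with every elliptic matrix of determinant one,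
whichever way it turns: replace `M` by `-M` if its lower left entry is negative. -/
lemma DualTurnsLeft.trace_mul_ne_zero {M X : Matrix (Fin 2) (Fin 2) ℝ} (hX : DualTurnsLeft X)
    (hd : M.det = 1) (ht : |M.trace| < 2) : (M * X).trace ≠ 0 := by
  rcases lt_trichotomy (M 1 0) 0 with hc | hc | hc
  · have h := hX (-M) ⟨by rw [Matrix.det_neg, hd]; simp, by rwa [Matrix.trace_neg, abs_neg],
      by simpa using hc⟩
    rw [neg_mul, Matrix.trace_neg] at h
    exact (neg_pos.1 h).ne
  · have h := disc_neg hd ht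
    rw [hc] at h
    nlinarith [sq_nonneg (M 1 1 - M 0 0)]
  · exact (hX M ⟨hd, ht, hc⟩).ne'

/-- **Non-degeneracy of traces of products with rotations** (Lemma A.4 of
Avila–Bochi–Yoccoz, after Avila–Bochi): `F(θ) = tr(B₁ R_θ ⋯ Bₙ R_θ)` is
differentiable and `F′(θ) ≠ 0` whenever `|F(θ)| < 2`. -/
theorem rotation_trace_derivative_ne_zero {n : ℕ} (hn : 1 ≤ n)
    (B : Fin n → SL2) :
    Differentiable ℝ (fun θ : ℝ =>
      Matrix.trace
        (List.ofFn fun i : Fin n =>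
          (B i : Matrix (Fin 2) (Fin 2) ℝ) * rot θ).prod) ∧
    ∀ θ : ℝ,
      |Matrix.trace
          (List.ofFn fun i : Fin n =>
            (B i : Matrix (Fin 2) (Fin 2) ℝ) * rot θ).prod| < 2 →
      deriv (fun θ : ℝ =>
        Matrix.trace
          (List.ofFn fun i : Fin n =>
            (B i : Matrix (Fin 2) (Fin 2) ℝ) * rot θ).prod) θ ≠ 0 := by
  have hprod : ∀ θ : ℝ, (List.ofFn fun i : Fin n =>
      (B i : Matrix (Fin 2) (Fin 2) ℝ) * rot θ).prod = rotProd (List.ofFn B) θ := by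
    intro θ
    rw [rotProd, List.map_ofFn]
    rfl
  simp only [hprod]
  obtain ⟨C, l, hl⟩ : ∃ C l, List.ofFn B = C :: l := by
    refine List.exists_cons_of_ne_nil fun h => ?_
    have := congrArg List.length h
    simp only [List.length_ofFn, List.length_nil] at this
    omega
  rw [hl]
  have hderiv : ∀ θ, ∃ X, DualTurnsLeft X ∧ HasDerivAt (fun t => (rotProd (C :: l) t).trace)
      (rotProd (C :: l) θ * X).trace θ := by
    intro θ
    obtain ⟨X, hX, hD⟩ := exists_logDeriv C l θ
    refine ⟨X, hX, ?_⟩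
    simp only [Matrix.trace_fin_two]
    exact (hD 0 0).add (hD 1 1)
  refine ⟨fun θ => ?_, fun θ ht => ?_⟩
  · obtain ⟨X, -, h⟩ := hderiv θ
    exact h.differentiableAt
  · obtain ⟨X, hX, h⟩ := hderiv θ
    rw [h.deriv]
    exact hX.trace_mul_ne_zero (det_rotProd _ θ) ht
end

section
/- Let 𝓗 ⊂ SL(2,ℝ)³ be the set of triples uniformly hyperbolic with respect to the full shift on three symbols, and let 𝓔 ⊂ SL(2,ℝ)³ be the set of triples having an elliptic product. Then there exist a triple ξ₀ on the frontier of 𝓗, a sequence (ξ_i) of triples in 𝓗 converging to ξ₀ such that ξ_i and ξ_j lie in distinct connected components of 𝓗 whenever i ≠ j, and a sequence (η_i) of triples in 𝓔 converging to ξ₀. -/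
/-!
Heteroclinic connections produce the accumulation. Let `A`, `B` be the hyperbolic matrices `matA`,
`matB` with eigenvalues `100`, `1/100`. In coordinates `(a, b)` the matrix `B` is
`diag(100, 1/100)`, while `A` is diagonal in the coordinates `X = a + b`, `Y = a + (9/10) b`. The
matrix `C = matC t` is given by `a = t X + 10 Y`, `b = X`, so that at `t = 0` it maps the expanding
direction of `A` to the contracting direction of `B`. The boundary point is `(A, B, matC 0)`.

The trace of `B ^ n C A ^ n` is `t * 100 ^ (2 n) + 11` (`trace_word`). It vanishes at
`t = -11 * 100 ^ (-2 n)`, which gives the elliptic products. At the parameters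
`t = -100 * 100 ^ (-2 K)` it is negative for `n = K` and positive for `n < K`. A uniformly hyperbolic
tuple has no product of trace zero (`UnifHyp.trace_ne_zero`), so the sign of the trace of each word is
constant on components, and these parameters lie in pairwise distinct components (`component_ne`) once
the corresponding triples are known to be uniformly hyperbolic.

Uniform hyperbolicity (`unifHyp_trip`) follows from an explicit multicone, the union of the regions
`InA K n` and `InV K j`, on which an adapted length is multiplied by at least `β > 1` under each of
`A`, `B`, `C` (`Good.stepA`, `Good.stepB`, `Good.stepC`). A vector of `InA K n` has been contracted
towards the expanding direction of `A` by `n` applications of `A` (by at least `K` if `n = K`); then `C` sends it close to the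
contracting direction of `B`, at relative distance of order `100 ^ (-2 n)` with a positive sign for
`n < K` and a negative one for `n = K`; about `n` applications of `B` move it away again, past the
contracting direction of `A`. The weights `(β / 100) ^ n` and `(100 / β) ^ j` in the adapted length
balance these two phases, and the factor `10` in `C` leaves room for the loss of `β ^ (2 K + 1) ≤ 3`.
-/

open Matrix

/-! ### The multicone and the adapted length -/

/-- Region containing the `A`-images: in the coordinates `X = a + b`, `Y = a + (9/10) b` diagonalising
`A`, the ratio `Y / X` is of order `100 ^ (-2 n)` (nonnegative and at most of this order when
`n = K`). The sign of the vector is normalised by `X > 0`. -/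
def InA (K n : ℕ) (a b : ℝ) : Prop :=
  1 ≤ n ∧ n ≤ K ∧ 0 < a + b ∧ (a + 9/10*b) * (100^n)^2 ≤ 11/10 * (a + b) ∧
    ((n = K ∧ 0 ≤ a + 9/10*b) ∨ 8/10 * (a + b) ≤ (a + 9/10*b) * (100^n)^2)

/-- Region containing the `B`- and `C`-images: in the coordinates `(a, b)` diagonalising `B`, either
`(a, b)` is near the expanding direction (`j = 0`), or `a / b` is of order `100 ^ (-2 j)`, with either sign.
The sign of the vector is normalised so that `a > 0` when `j = 0` and `b > 0` otherwise. -/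
def InV (K j : ℕ) (a b : ℝ) : Prop :=
  (j = 0 ∧ 0 < a ∧ 4 * |b| ≤ a) ∨
  (1 ≤ j ∧ j ≤ K ∧ 0 < b ∧
    ((7 * b ≤ a * (100^j)^2 ∧ a * (100^j)^2 ≤ 11 * b) ∨
     (-100 * b ≤ a * (100^j)^2 ∧ a * (100^j)^2 ≤ -50 * b)))

/-- The vector `(a, b)` lies in the multicone, and its adapted length is at least `r`. The adapted
length is `(a + b) (β / 100) ^ n` on `InA K n` and `|a| (100 / β) ^ j / 2` on `InV K j`. -/
def Good (K : ℕ) (β a b r : ℝ) : Prop :=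
  (∃ n, InA K n a b ∧ r * 100^n ≤ (a + b) * β^n) ∨
  (∃ j, InV K j a b ∧ r * β^j ≤ 1/2 * |a| * 100^j)

/-- On the regions `InV K j` the ratio `Y / X` stays of order one, and `X` dominates the adapted length.
This is all that is needed to apply `A` or `C` to such a vector. -/
lemma InV.bounds {K j : ℕ} {β a b r : ℝ} (hβ : 1 ≤ β) (hr : 0 ≤ r) (h : InV K j a b)
    (hv : r * β^j ≤ 1/2 * |a| * 100^j) :
    0 < a + b ∧ 8/10 * (a + b) ≤ a + 9/10*b ∧ a + 9/10*b ≤ 11/10*(a+b) ∧ r ≤ a + b := by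
  rcases h with ⟨rfl, ha, hb⟩ | ⟨hj, -, hb, h⟩
  · have h1 := le_abs_self b
    have h2 := neg_abs_le b
    rw [abs_of_pos ha] at hv
    simp only [pow_zero, mul_one] at hv
    refine ⟨?_, ?_, ?_, ?_⟩ <;> linarith
  · have hl : (100:ℝ) ≤ 100^j := by
      calc (100:ℝ) = 100^1 := by norm_num
        _ ≤ 100^j := pow_le_pow_right₀ (by norm_num) hj
    have hβj : 1 ≤ β^j := one_le_pow₀ hβ
    generalize (100:ℝ)^j = l at *
    generalize β^j = B at *
    have hl2 : (10000:ℝ) ≤ l^2 := by nlinarith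
    have habs : |a| * l^2 ≤ 100 * b := by
      have : |a| * l^2 = |a * l^2| := by rw [abs_mul, abs_of_nonneg (sq_nonneg l)]
      rw [this, abs_le]
      rcases h with h | h <;> constructor <;> linarith [h.1, h.2]
    have h0 := abs_nonneg a
    have habs2 : |a| * 10000 ≤ 100 * b := by nlinarith
    have habs3 : |a| * l ≤ b := by
      have : (|a| * l) * 100 ≤ |a| * l^2 := by nlinarith [mul_nonneg h0 (by linarith : 0 ≤ l)]
      linarith
    have h1 := le_abs_self a
    have h2 := neg_abs_le a
    have : r ≤ r * B := by nlinarith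
    refine ⟨?_, ?_, ?_, ?_⟩ <;> nlinarith

section step
variable {K : ℕ} {β a b r : ℝ}

/-- `A` maps `InA K n` to `InA K (n + 1)` for `n < K`, keeps `InA K K` invariant, and maps every
`InV K j` to `InA K 1`. -/
lemma Good.stepA (hK : 1 ≤ K) (hβ : 1 ≤ β) (hβ3 : β^(2*K+1) ≤ 3) (hr : 0 ≤ r)
    (h : Good K β a b r) :
    Good K β ((1/10-900)*a + (9/100-900)*b) ((1000-1/10)*a+(1000-9/100)*b) (β * r) := by
  have hβ' : β ≤ 3 := le_trans (le_self_pow₀ hβ (by omega)) hβ3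
  have e1 : ((1/10-900)*a + (9/100-900)*b) + ((1000-1/10)*a+(1000-9/100)*b) = 100*(a+b) := by ring
  have e2 : ((1/10-900)*a + (9/100-900)*b) + 9/10*((1000-1/10)*a+(1000-9/100)*b)
      = (a+9/10*b)/100 := by ring
  left
  rcases h with ⟨n, ⟨hn1, hnK, hX, hY, hY'⟩, hv⟩ | ⟨j, hj, hv⟩
  · rcases Nat.lt_or_ge n K with hlt | hge
    · refine ⟨n+1, ⟨by omega, by omega, ?_, ?_, Or.inr ?_⟩, ?_⟩
      · rw [e1]; positivity
      · rw [e1, e2, pow_succ (100:ℝ) n]; nlinarith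
      · rw [e1, e2, pow_succ (100:ℝ) n]
        rcases hY' with h | h
        · omega
        · nlinarith
      · rw [e1, pow_succ, pow_succ]; nlinarith
    · obtain rfl : n = K := le_antisymm hnK hge
      have hl : (1:ℝ) ≤ 100^n := one_le_pow₀ (by norm_num)
      have hY0 : 0 ≤ a + 9/10*b := by
        rcases hY' with h | h
        · exact h.2
        · by_contra hc
          push Not at hc
          nlinarith [sq_nonneg ((100:ℝ)^n)]
      refine ⟨n, ⟨hn1, le_rfl, ?_, ?_, Or.inl ⟨rfl, ?_⟩⟩, ?_⟩
      · rw [e1]; positivity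
      · rw [e1, e2]; nlinarith
      · rw [e2]; positivity
      · rw [e1]
        have : 0 ≤ (a+b) * β^n := by positivity
        have : β * (r * 100^n) ≤ 3 * ((a+b)*β^n) :=
          mul_le_mul hβ' hv (by positivity) (by norm_num)
        nlinarith
  · obtain ⟨hX, h1, h2, h3⟩ := hj.bounds hβ hr hv
    refine ⟨1, ⟨le_rfl, hK, ?_, ?_, Or.inr ?_⟩, ?_⟩
    · rw [e1]; positivity
    · rw [e1, e2]; linarith
    · rw [e1, e2]; linarith
    · rw [e1]; nlinarith

/-- `B` maps every `InA K n` to `InV K 0` (reversing the sign of the vector), `InV K (j + 1)` to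
`InV K j` up to sign, and keeps `InV K 0` invariant. -/
lemma Good.stepB (hβ : 1 ≤ β) (hβ3 : β^(2*K+1) ≤ 3) (hr : 0 ≤ r)
    (h : Good K β a b r) :
    Good K β (100*a) (b/100) (β * r) ∨ Good K β (-(100*a)) (-(b/100)) (β * r) := by
  have hβ' : β ≤ 3 := le_trans (le_self_pow₀ hβ (by omega)) hβ3
  rcases h with ⟨n, ⟨hn1, hnK, hX, hY, hY'⟩, hv⟩ | ⟨j, hj, hv⟩
  · have hl : (100:ℝ) ≤ 100^n := by
      calc (100:ℝ) = 100^1 := by norm_num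
        _ ≤ 100^n := pow_le_pow_right₀ (by norm_num) hn1
    have hβn : β^n ≤ 3 := le_trans (pow_le_pow_right₀ hβ (by omega)) hβ3
    generalize (100:ℝ)^n = l at *
    have hl2 : (10000:ℝ) ≤ l^2 := by nlinarith
    have hY0 : 0 ≤ a + 9/10*b := by
      rcases hY' with h | h
      · exact h.2
      · by_contra hc
        push Not at hc
        nlinarith
    have hY1 : (a + 9/10*b) * 10000 ≤ 11/10*(a+b) := by nlinarith
    have hb : |b| ≤ 10 * (a+b) := by rw [abs_le]; constructor <;> linarith
    have ha : -a ≥ 8 * (a+b) := by linarith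
    have hrX : r * 100 ≤ (a+b)*3 := by
      calc r * 100 ≤ r * l := by gcongr
        _ ≤ (a+b) * β^n := hv
        _ ≤ (a+b)*3 := by gcongr
    refine Or.inr (Or.inr ⟨0, Or.inl ⟨rfl, by linarith, ?_⟩, ?_⟩)
    · rw [abs_neg, abs_div, abs_of_pos (by norm_num : (0:ℝ) < 100)]; linarith
    · rw [abs_of_pos (by linarith), pow_zero, pow_zero]; nlinarith
  · rcases hj with ⟨rfl, ha, hb⟩ | ⟨hj1, hjK, hb, h⟩
    · refine Or.inl (Or.inr ⟨0, Or.inl ⟨rfl, by linarith, ?_⟩, ?_⟩)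
      · rw [abs_div, abs_of_pos (by norm_num : (0:ℝ) < 100)]; linarith
      · rw [abs_of_pos ha] at hv
        rw [abs_of_pos (by linarith)]
        simp only [pow_zero, mul_one] at hv ⊢
        nlinarith
    · obtain ⟨i, rfl⟩ : ∃ i, j = i + 1 := ⟨j - 1, by omega⟩
      have hv' : β * r * β^i ≤ 1/2 * |100 * a| * 100^i := by
        rw [abs_mul, abs_of_pos (by norm_num : (0:ℝ) < 100)]
        calc β * r * β^i = r * β^(i+1) := by ring
          _ ≤ _ := hv
          _ = _ := by ring
      rcases Nat.eq_zero_or_pos i with rfl | hi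
      · simp only [zero_add, pow_one] at h
        have hb' : |b/100| = b/100 := abs_of_pos (by positivity)
        rcases h with h | h
        · refine Or.inl (Or.inr ⟨0, Or.inl ⟨rfl, by linarith, ?_⟩, hv'⟩)
          rw [hb']; linarith
        · refine Or.inr (Or.inr ⟨0, Or.inl ⟨rfl, by linarith, ?_⟩, by rwa [abs_neg]⟩)
          rw [abs_neg, hb']; linarith
      · refine Or.inl (Or.inr ⟨i, Or.inr ⟨hi, by omega, by positivity, ?_⟩, hv'⟩)
        rw [pow_succ (100:ℝ) i] at h
        rcases h with h | h
        · exact Or.inl ⟨by nlinarith, by nlinarith⟩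
        · exact Or.inr ⟨by nlinarith, by nlinarith⟩

/-- For `t = -100 * 100 ^ (-2 K)`, `C` maps `InA K n` to the part `a > 0` of `InV K n` if `n < K` and to
its part `a < 0` if `n = K`, and maps every `InV K j` to `InV K 0`. -/
lemma Good.stepC (hβ : 1 ≤ β) (hβ3 : β^(2*K+1) ≤ 3) (hr : 0 ≤ r) (hK : 1 ≤ K)
    (h : Good K β a b r) :
    Good K β ((10 + -(100/(100^K)^2))*a + (9 + -(100/(100^K)^2))*b) (a+b) (β * r) := by
  have hβ' : β ≤ 3 := le_trans (le_self_pow₀ hβ (by omega)) hβ3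
  have e : (10 + -(100/(100^K)^2))*a + (9 + -(100/(100^K)^2))*b
      = 10 * (a + 9/10*b) - 100/(100^K)^2 * (a+b) := by ring
  rw [e]
  have hLL : (100:ℝ) ≤ 100^K := by
    calc (100:ℝ) = 100^1 := by norm_num
      _ ≤ 100^K := pow_le_pow_right₀ (by norm_num) hK
  right
  rcases h with ⟨n, ⟨hn1, hnK, hX, hY, hY'⟩, hv⟩ | ⟨j, hj, hv⟩
  · have hlpos : (0:ℝ) < 100^n := by positivity
    -- In both cases below the new first coordinate `a'` has `|a'| * 100 ^ (2 n)` at least `7 X`, and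
    -- `7 / 2` exceeds the loss `β ^ (2 n + 1) ≤ 3`.
    have key : ∀ a' : ℝ, 7 * (a+b) ≤ |a'| * (100^n)^2 →
        β * r * β^n ≤ 1/2 * |a'| * 100^n := by
      intro a' ha'
      have h3 : β^(2*n+1) ≤ 3 := le_trans (pow_le_pow_right₀ hβ (by omega)) hβ3
      have h4 : β * r * β^n * 100^n ≤ 3 * (a+b) := by
        calc β * r * β^n * 100^n = (r * 100^n) * β^(n+1) := by ring
          _ ≤ ((a+b) * β^n) * β^(n+1) := by gcongr
          _ = β^(2*n+1) * (a+b) := by ring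
          _ ≤ 3 * (a+b) := by gcongr
      have h5 : β * r * β^n * 100^n ≤ 1/2 * |a'| * 100^n * 100^n := by nlinarith
      exact le_of_mul_le_mul_right h5 hlpos
    have hup : (10 * (a + 9/10*b) - 100/(100^K)^2 * (a+b)) * (100^n)^2
        = 10 * ((a + 9/10*b) * (100^n)^2) - 100 * ((100^n)^2/(100^K)^2) * (a+b) := by ring
    rcases Nat.lt_or_ge n K with hlt | hge
    · have hratio : ((100:ℝ)^n)^2/(100^K)^2 ≤ 1/10000 := by
        have h1 : (100:ℝ)^(n+1) ≤ 100^K := pow_le_pow_right₀ (by norm_num) hlt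
        rw [pow_succ] at h1
        rw [div_le_iff₀ (by positivity)]
        have := pow_le_pow_left₀ (by positivity) h1 2
        nlinarith
      have hratio0 : 0 ≤ ((100:ℝ)^n)^2/(100^K)^2 := by positivity
      have hlow := hY'.resolve_left (by omega)
      have hlo : 7 * (a+b) ≤
          (10 * (a + 9/10*b) - 100/(100^K)^2 * (a+b)) * (100^n)^2 := by
        rw [hup]; nlinarith
      refine ⟨n, Or.inr ⟨hn1, hnK, hX, Or.inl ⟨hlo, ?_⟩⟩, key _ ?_⟩
      · rw [hup]; nlinarith [mul_nonneg hratio0 hX.le]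
      · exact hlo.trans (by gcongr; exact le_abs_self _)
    · obtain rfl : n = K := le_antisymm hnK hge
      rw [div_self (by positivity)] at hup
      have hY0 : 0 ≤ (a + 9/10*b) * (100^n)^2 := by
        rcases hY' with h | h
        · have := h.2
          positivity
        · linarith
      refine ⟨n, Or.inr ⟨hn1, hnK, hX, Or.inr ⟨?_, ?_⟩⟩, key _ ?_⟩
      · rw [hup]; linarith
      · rw [hup]; linarith
      · have h7 : 7 * (a+b) ≤
            -(10 * (a + 9/10*b) - 100/(100^n)^2 * (a+b)) * (100^n)^2 := by
          rw [neg_mul, hup]; linarith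
        exact h7.trans (by gcongr; exact neg_le_abs _)
  · obtain ⟨hX, h1, h2, h3⟩ := hj.bounds hβ hr hv
    have ht : 100/((100:ℝ)^K)^2 ≤ 1/100 := by
      rw [div_le_iff₀ (by positivity)]
      nlinarith
    have ha' : 7 * (a+b) ≤ 10 * (a + 9/10*b) - 100/(100^K)^2 * (a+b) := by nlinarith
    refine ⟨0, Or.inl ⟨rfl, by linarith, ?_⟩, ?_⟩
    · rw [abs_of_pos hX]; linarith
    · rw [abs_of_pos (by linarith), pow_zero, pow_zero]; nlinarith

/-- The linear form `X = a + b` bounds the adapted length on the whole multicone. -/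
lemma Good.le (hβ : 1 ≤ β) (hβ3 : β^(2*K+1) ≤ 3) (hr : 0 ≤ r) (h : Good K β a b r) :
    r ≤ a + b := by
  rcases h with ⟨n, ⟨hn1, hnK, hX, -, -⟩, hv⟩ | ⟨j, hj, hv⟩
  · have hl : (100:ℝ) ≤ 100^n := by
      calc (100:ℝ) = 100^1 := by norm_num
        _ ≤ 100^n := pow_le_pow_right₀ (by norm_num) hn1
    have hβn : β^n ≤ 3 := le_trans (pow_le_pow_right₀ hβ (by omega)) hβ3
    nlinarith
  · exact (hj.bounds hβ hr hv).2.2.2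

end step

/-! ### The family of triples -/

/-- The hyperbolic matrix with eigenvalues `100`, `1/100` which multiplies `X = a + b` by `100` and
divides `Y = a + (9/10) b` by `100`. -/
noncomputable def matA : SL2 := ⟨!![1/10-900, 9/100-900; 1000-1/10, 1000-9/100], by
  rw [Matrix.det_fin_two_of]; norm_num⟩

/-- The hyperbolic matrix `diag(100, 1/100)`. -/
noncomputable def matB : SL2 := ⟨!![100, 0; 0, 1/100], by rw [Matrix.det_fin_two_of]; norm_num⟩

/-- The matrix sending a vector to the one with `a = t X + 10 Y`, `b = X`; for `t = 0` it maps the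
expanding direction `Y = 0` of `matA` to the contracting direction `a = 0` of `matB`. -/
noncomputable def matC (t : ℝ) : SL2 := ⟨!![10+t, 9+t; 1, 1], by rw [Matrix.det_fin_two_of]; ring⟩

/-- The one-parameter family of triples `(A, B, C)`. Only `C` depends on the parameter. -/
noncomputable def trip (t : ℝ) : Fin 3 → SL2 := ![matA, matB, matC t]

lemma wordProd_cons {N : ℕ} (A : Fin N → SL2) (i : Fin N) (w : List (Fin N)) :
    wordProd A (i :: w) = wordProd A w * A i := by
  simp [wordProd]

lemma wordProd_append {N : ℕ} (A : Fin N → SL2) (w w' : List (Fin N)) :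
    wordProd A (w ++ w') = wordProd A w' * wordProd A w := by
  simp [wordProd]

lemma wordProd_replicate {N : ℕ} (A : Fin N → SL2) (i : Fin N) (n : ℕ) :
    wordProd A (List.replicate n i) = A i ^ n := by
  simp [wordProd]

/-! ### Uniform hyperbolicity at the parameters `-100 * 100 ^ (-2 K)` -/

/-- The condition `Good` for one of the vectors `v`, `-v`: the multicone is a subset of the projective line. -/
def GoodV (K : ℕ) (β : ℝ) (v : Fin 2 → ℝ) (r : ℝ) : Prop :=
  Good K β (v 0) (v 1) r ∨ Good K β (-v 0) (-v 1) r

lemma GoodV.step {K : ℕ} {β r : ℝ} {v : Fin 2 → ℝ} (hK : 1 ≤ K) (hβ : 1 ≤ β)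
    (hβ3 : β^(2*K+1) ≤ 3) (hr : 0 ≤ r) (h : GoodV K β v r) (i : Fin 3) :
    GoodV K β ((trip (-(100/(100^K)^2)) i : Matrix (Fin 2) (Fin 2) ℝ) *ᵥ v) (β * r) := by
  fin_cases i
  · rcases h with h | h
    · left
      convert h.stepA hK hβ hβ3 hr using 1 <;>
        simp [trip, matA, Matrix.mulVec, dotProduct, Fin.sum_univ_two]
    · right
      convert h.stepA hK hβ hβ3 hr using 1 <;>
        simp [trip, matA, Matrix.mulVec, dotProduct, Fin.sum_univ_two] <;> ring
  · rcases h with h | h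
    · rcases h.stepB hβ hβ3 hr with h | h
      · left
        convert h using 1 <;>
          simp [trip, matB, Matrix.mulVec, dotProduct, Fin.sum_univ_two] <;> ring
      · right
        convert h using 1 <;>
          simp [trip, matB, Matrix.mulVec, dotProduct, Fin.sum_univ_two] <;> ring
    · rcases h.stepB hβ hβ3 hr with h | h
      · right
        convert h using 1 <;>
          simp [trip, matB, Matrix.mulVec, dotProduct, Fin.sum_univ_two] <;> ring
      · left
        convert h using 1 <;>
          simp [trip, matB, Matrix.mulVec, dotProduct, Fin.sum_univ_two] <;> ring
  · rcases h with h | h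
    · left
      convert h.stepC hβ hβ3 hr hK using 1 <;>
        simp [trip, matC, Matrix.mulVec, dotProduct, Fin.sum_univ_two]
    · right
      convert h.stepC hβ hβ3 hr hK using 1 <;>
        simp [trip, matC, Matrix.mulVec, dotProduct, Fin.sum_univ_two] <;> ring

lemma GoodV.word {K : ℕ} {β : ℝ} (hK : 1 ≤ K) (hβ : 1 ≤ β)
    (hβ3 : β^(2*K+1) ≤ 3) (w : List (Fin 3)) : ∀ {r : ℝ} {v : Fin 2 → ℝ}, 0 ≤ r → GoodV K β v r →
    GoodV K β ((wordProd (trip (-(100/(100^K)^2))) w : Matrix (Fin 2) (Fin 2) ℝ) *ᵥ v)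
      (β ^ w.length * r) := by
  induction w with
  | nil => intro r v _ h; simpa [wordProd] using h
  | cons i w ih =>
    intro r v hr h
    have := ih (by positivity) (h.step hK hβ hβ3 hr i)
    rw [wordProd_cons, Matrix.SpecialLinearGroup.coe_mul, ← Matrix.mulVec_mulVec,
      List.length_cons, pow_succ β w.length, mul_assoc]
    exact this

lemma abs_apply_le_opNorm (M : Matrix (Fin 2) (Fin 2) ℝ) (i j : Fin 2) : |M i j| ≤ opNorm M := by
  have h := (Matrix.toEuclideanCLM (𝕜 := ℝ) M).le_opNorm (EuclideanSpace.single j (1:ℝ))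
  rw [PiLp.norm_single, norm_one, mul_one] at h
  refine le_trans ?_ h
  have h2 := PiLp.norm_apply_le (Matrix.toEuclideanCLM (𝕜 := ℝ) M (EuclideanSpace.single j (1:ℝ))) i
  rw [Real.norm_eq_abs] at h2
  rw [Matrix.ofLp_toEuclideanCLM] at h2
  simpa using h2

lemma unifHyp_trip {K : ℕ} (hK : 1 ≤ K) : UnifHyp (trip (-(100/(100^K)^2))) := by
  obtain ⟨β, hβ, hβ3⟩ : ∃ β : ℝ, 1 < β ∧ β^(2*K+1) ≤ 3 := by
    refine ⟨(3:ℝ) ^ ((1:ℝ)/((2*K+1 : ℕ):ℝ)), Real.one_lt_rpow (by norm_num) (by positivity), ?_⟩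
    rw [← Real.rpow_natCast, ← Real.rpow_mul (by norm_num), one_div_mul_cancel (by positivity),
      Real.rpow_one]
  -- The vector `(1, 0)` has adapted length `1/2`, and `|a + b|` is at most twice the norm of the image.
  refine ⟨1/4, by norm_num, β, hβ, fun w _ => ?_⟩
  have h0 : GoodV K β ![1, 0] (1/2) := by
    left; right
    exact ⟨0, Or.inl ⟨rfl, by simp, by simp⟩, by simp⟩
  have h := h0.word hK hβ.le hβ3 w (by norm_num)
  have hr : 0 ≤ β ^ w.length * (1/2) := by positivity
  set M : Matrix (Fin 2) (Fin 2) ℝ := (wordProd (trip (-(100/(100^K)^2))) w).1 with hM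
  have e0 : (M *ᵥ ![1,0]) 0 = M 0 0 := by simp [Matrix.mulVec, dotProduct, Fin.sum_univ_two]
  have e1 : (M *ᵥ ![1,0]) 1 = M 1 0 := by simp [Matrix.mulVec, dotProduct, Fin.sum_univ_two]
  have b0 := abs_le.1 (abs_apply_le_opNorm M 0 0)
  have b1 := abs_le.1 (abs_apply_le_opNorm M 1 0)
  rcases h with h | h
  · have := h.le hβ.le hβ3 hr
    rw [e0, e1] at this
    linarith
  · have := h.le hβ.le hβ3 hr
    rw [e0, e1] at this
    linarith

/-! ### Traces and components -/

lemma opNorm_one : opNorm 1 ≤ 1 := by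
  unfold opNorm
  rw [map_one]
  exact ContinuousLinearMap.norm_id_le

/-- A product of trace zero squares to `-1` by Cayley-Hamilton, so arbitrarily long words have product
`1`. -/
lemma UnifHyp.trace_ne_zero {N : ℕ} {A : Fin N → SL2} (h : UnifHyp A) {w : List (Fin N)}
    (hw : w ≠ []) : trace2 (wordProd A w) ≠ 0 := by
  intro h0
  obtain ⟨C, hC, lam, hlam, H⟩ := h
  have h4 : wordProd A w ^ 4 = 1 := by
    generalize wordProd A w = W at h0
    have hdet := W.2
    rw [Matrix.det_fin_two] at hdet
    simp only [trace2, Matrix.trace_fin_two] at h0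
    have h2 : (W : Matrix (Fin 2) (Fin 2) ℝ) * W = -1 := by
      have h11 : W.1 1 1 = - W.1 0 0 := by linarith
      rw [h11] at hdet
      ext i j
      fin_cases i <;> fin_cases j <;>
        simp [Matrix.mul_apply, Fin.sum_univ_two, h11] <;> linarith
    apply Subtype.ext
    change ((W ^ 4 : SL2) : Matrix (Fin 2) (Fin 2) ℝ) = 1
    rw [Matrix.SpecialLinearGroup.coe_pow, show 4 = 2 * 2 from rfl, pow_mul, sq (W.1), h2]
    simp
  have hpow : ∀ m : ℕ, wordProd A (List.replicate m w).flatten = wordProd A w ^ m := by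
    intro m
    induction m with
    | zero => simp [wordProd]
    | succ m ih => rw [List.replicate_succ, List.flatten_cons, wordProd_append, ih, pow_succ]
  have hlen : 0 < w.length := List.length_pos_of_ne_nil hw
  obtain ⟨n, hn⟩ := pow_unbounded_of_one_lt (1/C) hlam
  have hlen2 : (List.replicate (4*(n+1)) w).flatten.length = 4*(n+1)*w.length := by simp
  have hb := H (List.replicate (4*(n+1)) w).flatten (by
    intro hc
    rw [hc, List.length_nil] at hlen2
    have : 0 < 4*(n+1)*w.length := by positivity
    omega)
  rw [hlen2, hpow, pow_mul, h4, one_pow] at hb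
  have hle : lam ^ n ≤ lam ^ (4*(n+1)*w.length) := by
    apply pow_le_pow_right₀ hlam.le
    nlinarith
  have h1 := opNorm_one
  rw [div_lt_iff₀ hC] at hn
  have : lam ^ n * C ≤ 1 := by
    calc lam ^ n * C ≤ lam ^ (4*(n+1)*w.length) * C := by gcongr
      _ = C * lam ^ (4*(n+1)*w.length) := mul_comm _ _
      _ ≤ _ := hb
      _ ≤ 1 := h1
  linarith

lemma continuous_trace_wordProd {N : ℕ} (w : List (Fin N)) :
    Continuous fun A : Fin N → SL2 => trace2 (wordProd A w) := by
  have : Continuous fun A : Fin N → SL2 => (wordProd A w : Matrix (Fin 2) (Fin 2) ℝ) := by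
    induction w with
    | nil => simpa [wordProd] using continuous_const
    | cons i w ih =>
      simp only [wordProd_cons, Matrix.SpecialLinearGroup.coe_mul]
      exact ih.matrix_mul (continuous_subtype_val.comp (continuous_apply i))
  exact this.matrix_trace

/-- The word whose product for the triple `(A, B, C)` is `B ^ n C A ^ n`. The matrices with
index `0` act first. -/
def word (n : ℕ) : List (Fin 3) := List.replicate n 0 ++ (2 :: List.replicate n 1)

lemma word_ne_nil (n : ℕ) : word n ≠ [] := by simp [word]

/-- The leading term `100 ^ (2 n)` has coefficient `t`, since `C` with `t = 0` maps the
expanding direction of `A` to the contracting direction of `B`. -/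
lemma trace_word (t : ℝ) (n : ℕ) :
    trace2 (wordProd (trip t) (word n)) = t * (100^n)^2 + 11 := by
  have hA : ((matA ^ n : SL2) : Matrix (Fin 2) (Fin 2) ℝ) =
      !![10/100^n - 9*100^n, 9/100^n - 9*100^n; 10*100^n - 10/100^n, 10*100^n - 9/100^n] := by
    induction n with
    | zero => ext i j; fin_cases i <;> fin_cases j <;> simp <;> norm_num
    | succ n ih =>
      rw [pow_succ, Matrix.SpecialLinearGroup.coe_mul, ih]
      ext i j
      fin_cases i <;> fin_cases j <;>
        simp [matA, Matrix.mul_apply, Fin.sum_univ_two, pow_succ] <;> field_simp <;> ring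
  have hB : ((matB ^ n : SL2) : Matrix (Fin 2) (Fin 2) ℝ) = !![100^n, 0; 0, 1/100^n] := by
    clear hA
    induction n with
    | zero => ext i j; fin_cases i <;> fin_cases j <;> simp
    | succ n ih =>
      rw [pow_succ, Matrix.SpecialLinearGroup.coe_mul, ih]
      ext i j
      fin_cases i <;> fin_cases j <;>
        simp [matB, Matrix.mul_apply, Fin.sum_univ_two, pow_succ] <;> field_simp
  rw [word, wordProd_append, wordProd_cons, wordProd_replicate, wordProd_replicate, trace2,
    Matrix.SpecialLinearGroup.coe_mul, Matrix.SpecialLinearGroup.coe_mul,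
    show trip t 0 = matA from rfl, show trip t 1 = matB from rfl, show trip t 2 = matC t from rfl,
    hA, hB, Matrix.trace_fin_two]
  simp [matC, Matrix.mul_apply, Fin.sum_univ_two]
  field_simp
  ring

lemma continuous_trip : Continuous trip := by
  refine continuous_pi fun i => ?_
  fin_cases i
  · exact continuous_const
  · exact continuous_const
  · refine Continuous.subtype_mk ?_ _
    refine continuous_matrix fun i j => ?_
    fin_cases i <;> fin_cases j <;> simp <;> fun_prop

lemma tendsto_param (c : ℝ) :
    Filter.Tendsto (fun i : ℕ => -(c/((100:ℝ)^(i+1))^2)) Filter.atTop (nhds 0) := by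
  have h : Filter.Tendsto (fun i : ℕ => -(c/10000) * (1/10000:ℝ)^i) Filter.atTop
      (nhds (-(c/10000) * 0)) :=
    (tendsto_pow_atTop_nhds_zero_of_lt_one (by norm_num) (by norm_num)).const_mul _
  rw [mul_zero] at h
  convert h using 2 with i
  rw [← pow_mul, mul_comm, pow_mul, pow_succ, one_div, inv_pow]
  norm_num
  field_simp

/-- The word `B ^ (i+1) C A ^ (i+1)` has traces of opposite signs at the `i`-th and `j`-th
parameters, while its trace is continuous and cannot vanish on a component. -/
lemma component_ne {i j : ℕ} (hij : i < j) :
    connectedComponentIn {A : Fin 3 → SL2 | UnifHyp A} (trip (-(100/(100^(i+1))^2))) ≠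
      connectedComponentIn {A : Fin 3 → SL2 | UnifHyp A} (trip (-(100/(100^(j+1))^2))) := by
  intro h
  set S := {A : Fin 3 → SL2 | UnifHyp A}
  have hi : trip (-(100/(100^(i+1))^2)) ∈ S := unifHyp_trip (by omega)
  have hj : trip (-(100/(100^(j+1))^2)) ∈ S := unifHyp_trip (by omega)
  have mi := mem_connectedComponentIn hi
  have mj := mem_connectedComponentIn hj
  rw [← h] at mj
  have hpre := isPreconnected_connectedComponentIn (F := S) (x := trip (-(100/(100^(i+1))^2)))
  have hiv := hpre.intermediate_value mi mj (continuous_trace_wordProd (word (i+1))).continuousOn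
  have h0 : (0:ℝ) ∈ Set.Icc (trace2 (wordProd (trip (-(100/(100^(i+1))^2))) (word (i+1))))
      (trace2 (wordProd (trip (-(100/(100^(j+1))^2))) (word (i+1)))) := by
    rw [trace_word, trace_word]
    constructor
    · rw [neg_mul, div_mul_cancel₀ _ (by positivity)]; norm_num
    · have h1 : (100:ℝ)^(i+1+1) ≤ 100^(j+1) := pow_le_pow_right₀ (by norm_num) (by omega)
      rw [pow_succ _ (i+1)] at h1
      have h2 := pow_le_pow_left₀ (by positivity) h1 2
      have h3 : 100/((100:ℝ)^(j+1))^2 * (100^(i+1))^2 ≤ 1 := by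
        rw [div_mul_eq_mul_div, div_le_one (by positivity)]
        nlinarith [sq_nonneg ((100:ℝ)^(i+1))]
      linarith
  obtain ⟨x, hx, hx0⟩ := hiv h0
  exact (connectedComponentIn_subset S _ hx : UnifHyp x).trace_ne_zero (word_ne_nil _) hx0

/-- **Accumulation of components** (from Proposition 5.6 of
Avila–Bochi–Yoccoz): for the full 3-shift there is a boundary point of the
hyperbolicity locus which is accumulated both by infinitely many distinct
hyperbolic components and by the elliptic locus. -/
theorem accumulation_of_components :
    ∃ ξ₀ : Fin 3 → SL2,
      ξ₀ ∈ frontier {A : Fin 3 → SL2 | UnifHyp A} ∧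
      (∃ ξ : ℕ → Fin 3 → SL2, (∀ i, UnifHyp (ξ i)) ∧
        Filter.Tendsto ξ Filter.atTop (nhds ξ₀) ∧
        ∀ i j, i ≠ j →
          connectedComponentIn {A : Fin 3 → SL2 | UnifHyp A} (ξ i) ≠
            connectedComponentIn {A : Fin 3 → SL2 | UnifHyp A} (ξ j)) ∧
      (∃ η : ℕ → Fin 3 → SL2,
        (∀ i, ∃ w : List (Fin 3), w ≠ [] ∧ |trace2 (wordProd (η i) w)| < 2) ∧
        Filter.Tendsto η Filter.atTop (nhds ξ₀)) := by
  have hη : ∀ i : ℕ, trace2 (wordProd (trip (-(11/(100^(i+1))^2))) (word (i+1))) = 0 := by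
    intro i
    rw [trace_word, neg_mul, div_mul_cancel₀ _ (by positivity)]
    norm_num
  have tξ := (continuous_trip.tendsto 0).comp (tendsto_param 100)
  have tη := (continuous_trip.tendsto 0).comp (tendsto_param 11)
  refine ⟨trip 0, ⟨?_, ?_⟩, ⟨fun i => trip (-(100/(100^(i+1))^2)), fun i => unifHyp_trip (by omega),
    tξ, ?_⟩, ⟨fun i => trip (-(11/(100^(i+1))^2)), fun i => ⟨word (i+1), word_ne_nil _, ?_⟩, tη⟩⟩
  · exact mem_closure_of_tendsto tξ (Filter.Eventually.of_forall fun i => unifHyp_trip (by omega))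
  · -- Each triple `η i` has a product of trace zero, so every neighbourhood of `trip 0` leaves the locus.
    intro hint
    obtain ⟨i, hi⟩ := (tη.eventually (mem_interior_iff_mem_nhds.1 hint)).exists
    exact UnifHyp.trace_ne_zero hi (word_ne_nil (i+1)) (hη i)
  · intro i j hij
    rcases lt_or_gt_of_ne hij with h | h
    · exact component_ne h
    · exact (component_ne h).symm
  · rw [hη, abs_zero]; norm_num
end
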